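/- arXiv:2603.10288 — 7 statements merged into one kernel-verified Lean document; each statement's English description precedes it below -/
import Mathlib

section
/- Method 3.1 (version-robust minimality criterion). Let ℰ = (𝒳, Σ, {P_θ}_{θ∈Θ}) be a statistical model and μ a σ-finite measure on (𝒳,Σ) with P_θ ≪ μ for every θ ∈ Θ. Suppose (𝒳,Σ) is an analytic Borel space, (𝒯,Σ_𝒯) is a separable measurable space, T : 𝒳 → 𝒯 is measurable, and for each θ ∈ Θ, f_θ : 𝒳 → ℝ is a density (Radon–Nikodym derivative) of P_θ with respect to μ. If T is sufficient and there exists a nonempty countable subset Θ₀ ⊆ Θ such that for all x, y ∈ 𝒳 with y ∈ D(x,Θ₀) one has T(x) = T(y), then T is minimal sufficient. -/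
open MeasureTheory

noncomputable section

universe u v w u'

/-- `f` is a (pointwise nonnegative, measurable) density of `P` w.r.t. `μ`,
i.e. a version of the Radon–Nikodym derivative `dP/dμ`. -/
def IsDensity {X : Type*} [MeasurableSpace X] (P μ : Measure X) (f : X → ℝ) : Prop :=
  Measurable f ∧ (∀ x, 0 ≤ f x) ∧ P = μ.withDensity (fun x => ENNReal.ofReal (f x))

/-- The proportionality set `D(x, Θ')` determined by a family of densities. -/
def DSet {X : Type*} {Θ : Type*} (f : Θ → X → ℝ) (x : X) (Θ' : Set Θ) : Set X :=
  {y | ∃ h : ℝ, 0 < h ∧ ∀ θ ∈ Θ', f θ y = f θ x * h}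

/-- A statistic `T` is sufficient for the model `{P θ}`. -/
def IsSufficientStat {X : Type u} [mX : MeasurableSpace X] {Θ : Type v}
    (P : Θ → Measure X) {T' : Type w} [mT : MeasurableSpace T'] (T : X → T') : Prop :=
  Measurable T ∧
  ∀ E : Set X, MeasurableSet E → ∃ κ : T' → ℝ, Measurable κ ∧
    ∀ θ : Θ, (P θ)[E.indicator (fun _ => (1 : ℝ)) | MeasurableSpace.comap T mT] =ᵐ[P θ] κ ∘ T

/-- A statistic `T` is minimal sufficient: it is sufficient and it factors
`P θ`-a.e. (for every `θ`) through every sufficient statistic via a measurable map. -/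
def IsMinimalSufficientStat {X : Type u} [mX : MeasurableSpace X] {Θ : Type v}
    (P : Θ → Measure X) {T' : Type w} [mT : MeasurableSpace T'] (T : X → T') : Prop :=
  IsSufficientStat P T ∧
  ∀ (S' : Type u') (mS : MeasurableSpace S') (S : X → S'),
    @IsSufficientStat X mX Θ P S' mS S →
      ∃ g : S' → T', @Measurable S' T' mS mT g ∧ ∀ θ : Θ, T =ᵐ[P θ] g ∘ S

/-- A measurable space is analytic Borel iff it is separable (countably generated with
measurable singletons) and it is the image of a standard Borel space under a surjective
measurable map. -/
def IsAnalyticBorel (X : Type u) [mX : MeasurableSpace X] : Prop :=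
  MeasurableSpace.CountablyGenerated X ∧ MeasurableSingletonClass X ∧
  ∃ (Y : Type u) (mY : MeasurableSpace Y), @StandardBorelSpace Y mY ∧
    ∃ g : Y → X, @Measurable Y X mY mX g ∧ Function.Surjective g

/-- A sub-σ-algebra `m ⊆ Σ` is sufficient for the model `{P θ}`. -/
def IsSufficientSubalgebra {X : Type u} [mX : MeasurableSpace X] {Θ : Type v}
    (P : Θ → Measure X) (m : MeasurableSpace X) : Prop :=
  m ≤ mX ∧ ∀ E : Set X, MeasurableSet[mX] E → ∃ κ : X → ℝ, Measurable[m] κ ∧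
    ∀ θ : Θ, (P θ)[E.indicator (fun _ => (1 : ℝ)) | m] =ᵐ[P θ] κ

/-- The collection `𝔑_ℰ` of measurable sets null under every `P θ`. -/
def modelNullSets {X : Type u} [mX : MeasurableSpace X] {Θ : Type v}
    (P : Θ → Measure X) : Set (Set X) :=
  {N | MeasurableSet N ∧ ∀ θ, P θ N = 0}

/-- The σ-algebra `𝔄̄^ℰ` generated by `𝔄 ∪ 𝔑_ℰ`. -/
def completionAlg {X : Type u} [mX : MeasurableSpace X] {Θ : Type v}
    (P : Θ → Measure X) (m : MeasurableSpace X) : MeasurableSpace X :=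
  MeasurableSpace.generateFrom ({s | MeasurableSet[m] s} ∪ @modelNullSets X mX Θ P)

/-- A sub-σ-algebra is minimal sufficient iff it is sufficient and contained in the
`𝔑_ℰ`-completion of every sufficient sub-σ-algebra. -/
def IsMinimalSufficientSubalgebra {X : Type u} [mX : MeasurableSpace X] {Θ : Type v}
    (P : Θ → Measure X) (m : MeasurableSpace X) : Prop :=
  @IsSufficientSubalgebra X mX Θ P m ∧
  ∀ m' : MeasurableSpace X, @IsSufficientSubalgebra X mX Θ P m' →
    m ≤ @completionAlg X mX Θ P m'

/-- The total variation distance `d_ℰ(θ₁, θ₂) = sup_{E ∈ Σ} |P θ₁ E - P θ₂ E|`. -/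
def tvDist {X : Type u} [MeasurableSpace X] {Θ : Type v} (P : Θ → Measure X)
    (θ₁ θ₂ : Θ) : ℝ :=
  ⨆ E : {E : Set X // MeasurableSet E}, |(P θ₁ E.1).toReal - (P θ₂ E.1).toReal|

/-- The coarsest topology `τ⟨ℰ⟩` on `Θ` making `θ ↦ P θ E` continuous for every `E ∈ Σ`. -/
def modelTopology {X : Type u} [MeasurableSpace X] {Θ : Type v} (P : Θ → Measure X) :
    TopologicalSpace Θ :=
  ⨅ E : {E : Set X // MeasurableSet E},
    TopologicalSpace.induced (fun θ => (P θ E.1).toReal) inferInstance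

/-!
A countable mixture `ρ` of the model dominates every `P θ`. If `S` is sufficient, the conditional
probabilities given `S` are also those under `ρ`, so `dP θ / dρ` is a function `g θ` of `S`, and the
densities factor `ρ`-a.e. as `f θ = (g θ ∘ S) * p` with the common factor `p = dρ / dμ > 0`. Off a
single `ρ`-null set, two points with the same values `g θ (S x)`, `θ ∈ Θ₀`, therefore have
proportional densities along `Θ₀`, and `T` agrees at them. Hence `T` factors set-theoretically
through the map `x ↦ (g θ (S x))_{θ ∈ Θ₀}` into the Polish space `Θ₀ → ℝ`. The image of this map is
analytic: Lusin separation makes the factor measurable there, and universal measurability of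
analytic sets lets one extend it measurably to the whole space, after removing a null set.
-/

open Set
open scoped ENNReal

section AnalyticSets

/-- The sequences whose first `k` terms are bounded by those of `n`. As `k` grows, these sets
shrink to the compact box `Iic n`. -/
def boundedPrefix (n : ℕ → ℕ) (k : ℕ) : Set (ℕ → ℕ) :=
  {x | ∀ i < k, x i ≤ n i}

lemma boundedPrefix_zero (n : ℕ → ℕ) : boundedPrefix n 0 = univ := by
  simp [boundedPrefix]

lemma boundedPrefix_succ (n : ℕ → ℕ) (k : ℕ) :
    boundedPrefix n (k + 1) = boundedPrefix n k ∩ {x | x k ≤ n k} := by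
  ext x
  simp only [boundedPrefix, Nat.forall_lt_succ_right, mem_ofPred_eq, mem_inter_iff]

lemma exists_boundedPrefix_subset_of_isOpen {n : ℕ → ℕ} {V : Set (ℕ → ℕ)} (hV : IsOpen V)
    (hn : Iic n ⊆ V) : ∃ k, boundedPrefix n k ⊆ V := by
  have hopen (k : ℕ) : IsOpen {x | PiNat.cylinder x k ⊆ V} := by
    refine isOpen_iff_mem_nhds.2 fun x hx ↦ ?_
    filter_upwards [(PiNat.isOpen_cylinder _ x k).mem_nhds (PiNat.self_mem_cylinder x k)] with y hy
    rwa [PiNat.mem_cylinder_iff_eq.1 hy]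
  have hcover : Iic n ⊆ ⋃ k, {x | PiNat.cylinder x k ⊆ V} := fun x hx ↦ by
    obtain ⟨_, ⟨y, k, rfl⟩, hxy, hyV⟩ :=
      (PiNat.isTopologicalBasis_cylinders _).exists_subset_of_mem_open (hn hx) hV
    refine mem_iUnion.2 ⟨k, ?_⟩
    rwa [mem_ofPred_eq, PiNat.mem_cylinder_iff_eq.1 hxy]
  have hmono : Monotone fun k ↦ {x | PiNat.cylinder x k ⊆ V} :=
    fun _ _ hkl x hx ↦ (PiNat.cylinder_anti x hkl).trans hx
  have hcompact : IsCompact (Iic n) := Icc_bot (a := n) ▸ isCompact_Icc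
  obtain ⟨k, hk⟩ := hcompact.elim_directed_cover _ hopen hcover hmono.directed_le
  refine ⟨k, fun x hx ↦ hk (inf_le_right : x ⊓ n ≤ n) ?_⟩
  exact PiNat.mem_cylinder_iff.2 fun i hi ↦ (inf_eq_left.2 (hx i hi)).symm

variable {Z : Type*} [MeasurableSpace Z]

lemma exists_lt_measure_image_inter_le {α : Type*} (ν : Measure Z) (f : α → Z) (u : α → ℕ)
    {L : Set α} {c : ℝ≥0∞} (hc : c < ν (f '' L)) : ∃ m, c < ν (f '' (L ∩ {x | u x ≤ m})) := by
  have hmono : Monotone fun m ↦ f '' (L ∩ {x | u x ≤ m}) := fun _ _ hml ↦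
    image_mono (inter_subset_inter_right L fun _ hx ↦ le_trans hx hml)
  have hunion : ⋃ m, f '' (L ∩ {x | u x ≤ m}) = f '' L := by
    have : ⋃ m, {x | u x ≤ m} = univ := iUnion_eq_univ_iff.2 fun x ↦ ⟨u x, le_refl (u x)⟩
    rw [← image_iUnion, ← inter_iUnion, this, inter_univ]
  rwa [← hunion, hmono.measure_iUnion, lt_iSup_iff] at hc

lemma exists_forall_lt_measure_image_boundedPrefix (ν : Measure Z) (f : (ℕ → ℕ) → Z) {c : ℝ≥0∞}
    (hc : c < ν (range f)) : ∃ n, ∀ k, c < ν (f '' boundedPrefix n k) := by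
  have hstep (L : {L : Set (ℕ → ℕ) // c < ν (f '' L)}) (k : ℕ) :=
    exists_lt_measure_image_inter_le ν f (fun x ↦ x k) L.2
  choose m hm using hstep
  let L (k : ℕ) : {L : Set (ℕ → ℕ) // c < ν (f '' L)} :=
    k.rec ⟨univ, image_univ (f := f) ▸ hc⟩ fun k L ↦ ⟨L.1 ∩ {x | x k ≤ m L k}, hm L k⟩
  refine ⟨fun k ↦ m (L k) k, fun k ↦ ?_⟩
  suffices (L k).1 = boundedPrefix (fun k ↦ m (L k) k) k from this ▸ (L k).2
  induction k with
  | zero => exact (boundedPrefix_zero _).symm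
  | succ k ih => rw [boundedPrefix_succ, ← ih]

lemma exists_isCompact_subset_range_le_measure [TopologicalSpace Z] (ν : Measure Z)
    [ν.OuterRegular] {f : (ℕ → ℕ) → Z} (hf : Continuous f) {c : ℝ≥0∞} (hc : c < ν (range f)) :
    ∃ K ⊆ range f, IsCompact K ∧ c ≤ ν K := by
  obtain ⟨n, hn⟩ := exists_forall_lt_measure_image_boundedPrefix ν f hc
  have hcompact : IsCompact (Iic n) := Icc_bot (a := n) ▸ isCompact_Icc
  refine ⟨f '' Iic n, image_subset_range f _, hcompact.image hf, ?_⟩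
  rw [Set.measure_eq_iInf_isOpen]
  refine le_iInf₂ fun U hU ↦ le_iInf fun hUopen ↦ ?_
  obtain ⟨k, hk⟩ :=
    exists_boundedPrefix_subset_of_isOpen (hUopen.preimage hf) (image_subset_iff.1 hU)
  exact (hn k).le.trans (measure_mono (image_subset_iff.2 hk))

variable [TopologicalSpace Z] [PolishSpace Z] [BorelSpace Z]

lemma nullMeasurableSet_range_of_continuous (ν : Measure Z) [IsFiniteMeasure ν]
    {f : (ℕ → ℕ) → Z} (hf : Continuous f) : NullMeasurableSet (range f) ν := by
  rcases eq_zero_or_pos (ν (range f)) with hzero | hpos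
  · exact .of_null hzero
  let _ := TopologicalSpace.upgradeIsCompletelyMetrizable Z
  obtain ⟨c, -, hc, hlim⟩ := exists_seq_strictMono_tendsto' hpos
  choose K hKsub hKcompact hKmeas using
    fun k ↦ exists_isCompact_subset_range_le_measure ν hf (hc k).2
  have hmeas : NullMeasurableSet (⋃ k, K k) ν :=
    (MeasurableSet.iUnion fun k ↦ (hKcompact k).measurableSet).nullMeasurableSet
  have hle : ν (range f) ≤ ν (⋃ k, K k) :=
    le_of_tendsto' hlim fun k ↦ (hKmeas k).trans (measure_mono (subset_iUnion K k))
  exact hmeas.congr <|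
    ae_eq_of_subset_of_measure_ge (iUnion_subset hKsub) hle hmeas (measure_ne_top ν _)

theorem nullMeasurableSet_of_analyticSet (ν : Measure Z) [SFinite ν] {s : Set Z}
    (hs : AnalyticSet s) : NullMeasurableSet s ν := by
  rw [AnalyticSet_def] at hs
  rcases hs with rfl | ⟨f, hf, rfl⟩
  · exact nullMeasurableSet_empty
  · exact (nullMeasurableSet_range_of_continuous ν.toFinite hf).mono_ac
      (absolutelyContinuous_toFinite ν)

end AnalyticSets

section Factorization

variable {X Y Z W : Type*} [MeasurableSpace X] [MeasurableSpace Y] [MeasurableSpace Z]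
  [MeasurableSpace W] [StandardBorelSpace Y] [StandardBorelSpace Z]

lemma exists_measurable_ae_forall_eq_of_factorsThrough [Nonempty W] (ν : Measure Z) [SFinite ν]
    {φ : Y → Z} (hφ : Measurable φ) {τ : Y → W} (hτ : Measurable τ) (hfac : τ.FactorsThrough φ) :
    ∃ g : Z → W, Measurable g ∧ ∀ᵐ z ∂ν, ∀ y, φ y = z → g z = τ y := by
  classical
  let _ := upgradeStandardBorel Z
  have hrange : AnalyticSet (range φ) :=
    image_univ (f := φ) ▸ MeasurableSet.univ.analyticSet_image hφ
  obtain ⟨B, hBsub, hB, hBae⟩ :=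
    (nullMeasurableSet_of_analyticSet ν hrange).exists_measurable_subset_ae_eq
  let w : W := Classical.arbitrary W
  let g := Function.extend φ τ fun _ ↦ w
  have hgφ (y : Y) : g (φ y) = τ y := hfac.extend_apply _ y
  -- On the analytic set `range φ`, measurability is Lusin separation.
  have hg : Measurable ((range φ).domRestrict g) :=
    (hφ.measurable_comp_iff_restrict).1 ((funext hgφ : g ∘ φ = τ) ▸ hτ)
  refine ⟨B.piecewise g fun _ ↦ w, ?_, ?_⟩
  · refine measurable_of_restrict_of_restrict_compl hB ?_ ?_
    · rw [domRestrict_piecewise]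
      exact hg.comp (measurable_inclusion hBsub)
    · rw [domRestrict_piecewise_compl]
      exact measurable_const
  · filter_upwards [hBae.mem_iff] with z hz y hy
    rw [piecewise_eq_of_mem _ _ _ (hz.2 ⟨y, hy⟩), ← hy, hgφ]

theorem exists_measurable_ae_eq_comp_of_surjective [Nonempty X] {γ : Y → X} (hγ : Measurable γ)
    (hγ_surj : Function.Surjective γ) (ν : Measure X) [SFinite ν] {F : X → Z} (hF : Measurable F)
    {T : X → W} (hT : Measurable T) {p : X → Prop} (hp : ∀ᵐ x ∂ν, p x)
    (hFT : ∀ x y, p x → p y → F x = F y → T x = T y) :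
    ∃ g : Z → W, Measurable g ∧ T =ᵐ[ν] g ∘ F := by
  obtain ⟨A, hAae, hA, hAp⟩ := hp.exists_measurable_mem
  have := (hγ hA).standardBorel
  have : Nonempty W := ‹Nonempty X›.map T
  let δ : γ ⁻¹' A → X := fun y ↦ γ y
  have hδ : Measurable δ := hγ.comp measurable_subtype_coe
  obtain ⟨g, hg, hgae⟩ := exists_measurable_ae_forall_eq_of_factorsThrough (ν.map F)
    (hF.comp hδ) (hT.comp hδ) fun y z hyz ↦ hFT _ _ (hAp _ y.2) (hAp _ z.2) hyz
  refine ⟨g, hg, ?_⟩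
  filter_upwards [ae_of_ae_map hF.aemeasurable hgae, hAae] with x hx hxA
  obtain ⟨y, rfl⟩ := hγ_surj x
  exact (hx ⟨y, hxA⟩ rfl).symm

end Factorization

section Domination

variable {X ι : Type*} [MeasurableSpace X]

lemma exists_seq_forall_ae_le_iUnion [Nonempty ι] (μ : Measure X) [SFinite μ] {A : ι → Set X}
    (hA : ∀ i, MeasurableSet (A i)) : ∃ c : ℕ → ι, ∀ i, A i ≤ᵐ[μ] ⋃ n, A (c n) := by
  let ν := μ.toFinite
  let Φ (c : ℕ → ι) : ℝ≥0∞ := ν (⋃ n, A (c n))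
  obtain ⟨u, -, hu, humem⟩ := exists_seq_tendsto_sSup (range_nonempty Φ) (OrderTop.bddAbove _)
  choose d hd using humem
  let c (n : ℕ) : ι := d n.unpair.1 n.unpair.2
  have hmax (e : ℕ → ι) : Φ e ≤ Φ c := by
    refine (le_sSup (mem_range_self e)).trans (le_of_tendsto' hu fun n ↦ ?_)
    rw [← hd n]
    refine measure_mono (iUnion_subset fun k ↦ ?_)
    exact subset_iUnion_of_subset (n.pair k) (by simp [c])
  refine ⟨c, fun i ↦ (absolutelyContinuous_toFinite μ).ae_le ?_⟩
  have hle : ν (A i ∪ ⋃ n, A (c n)) ≤ ν (⋃ n, A (c n)) := by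
    refine le_trans (measure_mono ?_) (hmax fun n ↦ n.casesOn i c)
    exact union_subset (subset_iUnion_of_subset 0 subset_rfl)
      (iUnion_subset fun n ↦ subset_iUnion_of_subset (n + 1) subset_rfl)
  have hmeas : NullMeasurableSet (⋃ n, A (c n)) ν :=
    (MeasurableSet.iUnion fun n ↦ hA (c n)).nullMeasurableSet
  have hunion : (⋃ n, A (c n) : Set X) =ᵐ[ν] (A i ∪ ⋃ n, A (c n) : Set X) :=
    ae_eq_of_subset_of_measure_ge subset_union_right hle hmeas (measure_ne_top ν _)
  exact subset_union_left.eventuallyLE.trans hunion.symm.le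

theorem exists_seq_forall_absolutelyContinuous_sum [Nonempty ι] {μ : Measure X} [SFinite μ]
    {P : ι → Measure X} [∀ i, SFinite (P i)] (hP : ∀ i, P i ≪ μ) :
    ∃ c : ℕ → ι, ∀ i, P i ≪ Measure.sum fun n ↦ P (c n) := by
  let ν := μ.toFinite
  let f (i : ι) := (P i).rnDeriv ν
  have hf (i : ι) : Measurable (f i) := Measure.measurable_rnDeriv _ _
  have hfP (i : ι) : ν.withDensity (f i) = P i :=
    Measure.withDensity_rnDeriv_eq _ _ ((hP i).trans (absolutelyContinuous_toFinite μ))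
  obtain ⟨c, hc⟩ := exists_seq_forall_ae_le_iUnion ν (A := fun i ↦ {x | f i x ≠ 0})
    fun i ↦ hf i (measurableSet_singleton 0).compl
  suffices h : ∀ i (p : X → Prop), (∀ᵐ x ∂Measure.sum fun n ↦ P (c n), p x) → ∀ᵐ x ∂P i, p x from
    ⟨c, fun i ↦ Measure.ae_le_iff_absolutelyContinuous.1 (h i)⟩
  intro i p hp
  have hpc (n : ℕ) : ∀ᵐ x ∂ν, f (c n) x ≠ 0 → p x := by
    rw [← ae_withDensity_iff (hf (c n)), hfP]
    exact Measure.ae_sum_iff.1 hp n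
  rw [← hfP i, ae_withDensity_iff (hf i)]
  filter_upwards [hc i, ae_all_iff.2 hpc] with x hx hpx hi
  obtain ⟨n, hn⟩ := mem_iUnion.1 (hx hi)
  exact hpx n hn

/-- The mixture `∑ₙ 2⁻⁽ⁿ⁺¹⁾ Qₙ`, a single measure with the same null sets as the sequence `Q`. -/
def geometricMixture (Q : ℕ → Measure X) : Measure X :=
  Measure.sum fun n ↦ (2⁻¹ ^ (n + 1) : ℝ≥0∞) • Q n

instance geometricMixture.isProbabilityMeasure (Q : ℕ → Measure X)
    [∀ n, IsProbabilityMeasure (Q n)] : IsProbabilityMeasure (geometricMixture Q) := by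
  constructor
  simp [geometricMixture, ENNReal.tsum_geometric_add_one, ENNReal.one_sub_inv_two,
    ENNReal.inv_mul_cancel]

lemma sum_absolutelyContinuous_geometricMixture (Q : ℕ → Measure X) :
    Measure.sum Q ≪ geometricMixture Q :=
  Measure.absolutelyContinuous_sum_left fun n ↦ Measure.absolutelyContinuous_sum_right n <|
    Measure.absolutelyContinuous_smul <| pow_ne_zero _ <| by simp

lemma geometricMixture_absolutelyContinuous {μ : Measure X} {Q : ℕ → Measure X}
    (hQ : ∀ n, Q n ≪ μ) : geometricMixture Q ≪ μ :=
  Measure.absolutelyContinuous_sum_left fun n ↦ (hQ n).smul_left _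

end Domination

section HalmosSavage

variable {X S' : Type*} [mX : MeasurableSpace X] [mS : MeasurableSpace S'] {S : X → S'}
  {E : Set X} {k : S' → ℝ≥0∞}

/-- `k` is a version of the conditional probability of `E` given `S` under `Q`, i.e.
`Q (E ∩ S ⁻¹' B) = ∫ k` over `B` for the law of `S`. This form is linear in `Q`, so that a version
common to several measures is also one for their mixtures. -/
def IsCondProb (Q : Measure X) (S : X → S') (E : Set X) (k : S' → ℝ≥0∞) : Prop :=
  (Q.restrict E).map S = (Q.map S).withDensity k

lemma isCondProb_of_condExp_ae_eq {Q : Measure X} [IsFiniteMeasure Q] (hS : Measurable S)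
    (hE : MeasurableSet E) {κ : S' → ℝ} (hκ : Measurable κ)
    (hQ : Q[E.indicator (fun _ ↦ (1 : ℝ)) | mS.comap S] =ᵐ[Q] κ ∘ S) :
    IsCondProb Q S E fun s ↦ ENNReal.ofReal (κ s) := by
  have hcond : Q⁻[E.indicator 1 | mS.comap S] =ᵐ[Q] fun x ↦ ENNReal.ofReal (κ (S x)) := by
    have hind : (fun x ↦ ENNReal.ofReal (E.indicator (fun _ ↦ (1 : ℝ)) x)) = E.indicator 1 := by
      ext x
      by_cases hx : x ∈ E <;> simp [hx]
    rw [← hind]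
    refine (condLExp_ofReal _ ((integrable_const 1).indicator hE) ?_).trans ?_
    · exact ae_of_all _ (indicator_nonneg fun _ _ ↦ zero_le_one)
    · filter_upwards [hQ] with x hx
      rw [hx, Function.comp_apply]
  refine Measure.ext fun B hB ↦ ?_
  calc (Q.restrict E).map S B
    _ = ∫⁻ x in S ⁻¹' B, E.indicator 1 x ∂Q := by
      rw [Measure.map_apply hS hB, lintegral_indicator_one hE,
        Measure.restrict_apply (hS hB), Measure.restrict_apply hE, inter_comm]
    _ = ∫⁻ x in S ⁻¹' B, ENNReal.ofReal (κ (S x)) ∂Q := by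
      rw [← setLIntegral_condLExp hS.comap_le Q _ ⟨B, hB, rfl⟩]
      exact lintegral_congr_ae (ae_restrict_of_ae hcond)
    _ = (Q.map S).withDensity (fun s ↦ ENNReal.ofReal (κ s)) B := by
      rw [withDensity_apply _ hB, setLIntegral_map hB hκ.ennreal_ofReal hS]

lemma IsCondProb.geometricMixture {Q : ℕ → Measure X} (hS : Measurable S) (hE : MeasurableSet E)
    (hQ : ∀ n, IsCondProb (Q n) S E k) : IsCondProb (geometricMixture Q) S E k := by
  unfold IsCondProb at hQ ⊢
  simp only [_root_.geometricMixture, Measure.restrict_sum _ hE, Measure.restrict_smul,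
    Measure.map_sum hS.aemeasurable, Measure.map_smul, withDensity_sum, withDensity_smul_measure,
    hQ]

lemma IsCondProb.measure_eq_lintegral {Q : Measure X} (hS : Measurable S)
    (hQ : IsCondProb Q S E k) : Q E = ∫⁻ s, k s ∂Q.map S := by
  calc Q E = (Q.restrict E).map S univ := by simp [Measure.map_apply hS]
    _ = ∫⁻ s, k s ∂Q.map S := by rw [hQ, withDensity_apply _ .univ, setLIntegral_univ]

/-- The two factors `d(Q ∘ S⁻¹)/d(ρ ∘ S⁻¹)` and `k` can be integrated in either order. -/
theorem withDensity_rnDeriv_map_comp_eq_of_isCondProb {Q ρ : Measure X}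
    [(Q.map S).HaveLebesgueDecomposition (ρ.map S)] (hQρ : Q ≪ ρ) (hS : Measurable S)
    (hcond : ∀ E, MeasurableSet E → ∃ k, Measurable k ∧ IsCondProb Q S E k ∧ IsCondProb ρ S E k) :
    ρ.withDensity ((Q.map S).rnDeriv (ρ.map S) ∘ S) = Q := by
  refine Measure.ext fun E hE ↦ ?_
  obtain ⟨k, hk, hQ, hρ⟩ := hcond E hE
  have hg : Measurable ((Q.map S).rnDeriv (ρ.map S)) := Measure.measurable_rnDeriv _ _
  symm
  calc Q E
    _ = ∫⁻ s, (Q.map S).rnDeriv (ρ.map S) s * k s ∂ρ.map S := by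
      rw [hQ.measure_eq_lintegral hS, lintegral_rnDeriv_mul (hQρ.map hS) hk.aemeasurable]
    _ = ∫⁻ s, (Q.map S).rnDeriv (ρ.map S) s ∂(ρ.restrict E).map S := by
      rw [hρ, lintegral_withDensity_eq_lintegral_mul _ hk hg]
      simp only [Pi.mul_apply, mul_comm]
    _ = ρ.withDensity ((Q.map S).rnDeriv (ρ.map S) ∘ S) E := by
      rw [lintegral_map hg hS, withDensity_apply _ hE]
      rfl

variable {Θ : Type*} {P : Θ → Measure X} [∀ θ, IsProbabilityMeasure (P θ)]

theorem IsSufficientStat.exists_rnDeriv_geometricMixture_ae_eq (hS : IsSufficientStat P S)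
    (c : ℕ → Θ) {θ : Θ} (hθ : P θ ≪ geometricMixture fun n ↦ P (c n)) :
    ∃ g : S' → ℝ≥0∞, Measurable g ∧
      (P θ).rnDeriv (geometricMixture fun n ↦ P (c n))
        =ᵐ[geometricMixture fun n ↦ P (c n)] g ∘ S := by
  obtain ⟨hSm, hScond⟩ := hS
  let ρ := geometricMixture fun n ↦ P (c n)
  let g := ((P θ).map S).rnDeriv (ρ.map S)
  have hg : Measurable g := Measure.measurable_rnDeriv _ _
  have hdens : ρ.withDensity (g ∘ S) = P θ := by
    refine withDensity_rnDeriv_map_comp_eq_of_isCondProb hθ hSm fun E hE ↦ ?_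
    obtain ⟨κ, hκ, hκP⟩ := hScond E hE
    have hcond (θ : Θ) := isCondProb_of_condExp_ae_eq hSm hE hκ (hκP θ)
    exact ⟨_, hκ.ennreal_ofReal, hcond θ, .geometricMixture hSm hE fun n ↦ hcond (c n)⟩
  refine ⟨g, hg, ?_⟩
  conv_lhs => rw [← hdens]
  exact Measure.rnDeriv_withDensity ρ (hg.comp hSm)

end HalmosSavage

section Densities

variable {X Θ : Type*}

lemma mem_DSet_of_eq_mul {f : Θ → X → ℝ} {Θ' : Set Θ} {x y : X} {g : Θ → ℝ} {p q : ℝ}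
    (hp : 0 < p) (hq : 0 < q) (hx : ∀ θ ∈ Θ', f θ x = g θ * p) (hy : ∀ θ ∈ Θ', f θ y = g θ * q) :
    y ∈ DSet f x Θ' := by
  refine ⟨q / p, div_pos hq hp, fun θ hθ ↦ ?_⟩
  rw [hx θ hθ, hy θ hθ]
  field_simp

variable [MeasurableSpace X]

lemma IsDensity.ae_eq_rnDeriv {P μ : Measure X} [SigmaFinite μ] {f : X → ℝ}
    (hf : IsDensity P μ f) : f =ᵐ[μ] fun x ↦ (P.rnDeriv μ x).toReal := by
  obtain ⟨hmeas, hnonneg, rfl⟩ := hf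
  filter_upwards [Measure.rnDeriv_withDensity μ hmeas.ennreal_ofReal] with x hx
  rw [hx, ENNReal.toReal_ofReal (hnonneg x)]

lemma IsDensity.ae_eq_rnDeriv_mul_rnDeriv {P ρ μ : Measure X} [SigmaFinite P] [SigmaFinite ρ]
    [SigmaFinite μ] (hρ : ρ ≪ μ) {f : X → ℝ} (hf : IsDensity P μ f) :
    f =ᵐ[ρ] fun x ↦ (P.rnDeriv ρ x).toReal * (ρ.rnDeriv μ x).toReal := by
  have hchain : P.rnDeriv ρ * ρ.rnDeriv μ =ᵐ[ρ] P.rnDeriv μ := Measure.rnDeriv_mul_rnDeriv' hρ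
  filter_upwards [hρ.ae_le hf.ae_eq_rnDeriv, hchain] with x hx hxchain
  rw [hx, ← hxchain, Pi.mul_apply, ENNReal.toReal_mul]

theorem IsSufficientStat.exists_forall_density_ae_eq_comp_mul [Nonempty Θ] {P : Θ → Measure X}
    [∀ θ, IsProbabilityMeasure (P θ)] {μ : Measure X} [SigmaFinite μ] (hP : ∀ θ, P θ ≪ μ)
    {f : Θ → X → ℝ} (hf : ∀ θ, IsDensity (P θ) μ (f θ)) {S' : Type*} [MeasurableSpace S']
    {S : X → S'} (hS : IsSufficientStat P S) :
    ∃ ρ : Measure X, IsFiniteMeasure ρ ∧ (∀ θ, P θ ≪ ρ) ∧ ∃ (g : Θ → S' → ℝ) (p : X → ℝ),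
      (∀ θ, Measurable (g θ)) ∧ (∀ᵐ x ∂ρ, 0 < p x) ∧
        ∀ θ, f θ =ᵐ[ρ] fun x ↦ g θ (S x) * p x := by
  obtain ⟨c, hc⟩ := exists_seq_forall_absolutelyContinuous_sum hP
  let ρ := geometricMixture fun n ↦ P (c n)
  have hPρ (θ : Θ) : P θ ≪ ρ := (hc θ).trans (sum_absolutelyContinuous_geometricMixture _)
  have hρμ : ρ ≪ μ := geometricMixture_absolutelyContinuous fun n ↦ hP (c n)
  choose g hg hgρ using fun θ ↦ hS.exists_rnDeriv_geometricMixture_ae_eq c (hPρ θ)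
  refine ⟨ρ, inferInstance, hPρ, fun θ s ↦ (g θ s).toReal, fun x ↦ (ρ.rnDeriv μ x).toReal,
    fun θ ↦ (hg θ).ennreal_toReal, ?_, fun θ ↦ ?_⟩
  · filter_upwards [Measure.rnDeriv_pos hρμ, hρμ.ae_le (ρ.rnDeriv_lt_top μ)] with x hpos hlt
    exact ENNReal.toReal_pos hpos.ne' hlt.ne
  · filter_upwards [(hf θ).ae_eq_rnDeriv_mul_rnDeriv hρμ, hgρ θ] with x hx hgx
    rw [hx, hgx, Function.comp_apply]

end Densities

theorem method_3_1_general {X Y Θ S' W : Type*} [MeasurableSpace X] [MeasurableSpace Y]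
    [StandardBorelSpace Y] [MeasurableSpace S'] [MeasurableSpace W] [Nonempty Θ]
    {P : Θ → Measure X} [∀ θ, IsProbabilityMeasure (P θ)] {μ : Measure X} [SigmaFinite μ]
    (hP : ∀ θ, P θ ≪ μ) {γ : Y → X} (hγ : Measurable γ) (hγ_surj : Function.Surjective γ)
    {T : X → W} (hT : Measurable T) {f : Θ → X → ℝ} (hf : ∀ θ, IsDensity (P θ) μ (f θ))
    {Θ₀ : Set Θ} (hcount : Θ₀.Countable) (hD : ∀ x y, y ∈ DSet f x Θ₀ → T x = T y)
    {S : X → S'} (hS : IsSufficientStat P S) :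
    ∃ g : S' → W, Measurable g ∧ ∀ θ, T =ᵐ[P θ] g ∘ S := by
  have : Nonempty X := (P (Classical.arbitrary Θ)).nonempty_of_neZero
  have : Countable Θ₀ := hcount
  obtain ⟨ρ, _, hPρ, g, p, hg, hp, hfρ⟩ := hS.exists_forall_density_ae_eq_comp_mul hP hf
  let G (s : S') (θ : Θ₀) : ℝ := g θ s
  have hG : Measurable G := measurable_pi_lambda _ fun θ ↦ hg θ
  have hfG : ∀ᵐ x ∂ρ, ∀ θ ∈ Θ₀, f θ x = g θ (S x) * p x :=
    (ae_ball_iff hcount).2 fun θ _ ↦ hfρ θ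
  have hfiber (x y : X) (hx : 0 < p x ∧ ∀ θ ∈ Θ₀, f θ x = g θ (S x) * p x)
      (hy : 0 < p y ∧ ∀ θ ∈ Θ₀, f θ y = g θ (S y) * p y) (hxy : G (S x) = G (S y)) :
      T x = T y := by
    have hg_eq (θ : Θ) (hθ : θ ∈ Θ₀) : g θ (S x) = g θ (S y) := congrFun hxy ⟨θ, hθ⟩
    exact hD x y <| mem_DSet_of_eq_mul hx.1 hy.1 hx.2 fun θ hθ ↦ by rw [hy.2 θ hθ, hg_eq θ hθ]
  obtain ⟨h, hh, hTh⟩ := exists_measurable_ae_eq_comp_of_surjective hγ hγ_surj ρ (hG.comp hS.1) hT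
    (hp.and hfG) hfiber
  exact ⟨h ∘ G, hh.comp hG, fun θ ↦ (hPρ θ).ae_le hTh⟩

/-- Method 3.1 (version-robust minimality criterion). -/
theorem method_3_1
    {X : Type u} [mX : MeasurableSpace X] {Θ : Type v} [Nonempty Θ]
    (P : Θ → Measure X) (hP : ∀ θ, IsProbabilityMeasure (P θ))
    (μ : Measure X) (hμ : SigmaFinite μ) (hac : ∀ θ, P θ ≪ μ)
    (hX : IsAnalyticBorel X)
    {T' : Type w} [mT : MeasurableSpace T']
    (hTcg : MeasurableSpace.CountablyGenerated T')
    (hTsing : MeasurableSingletonClass T')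
    (T : X → T') (hT : Measurable T)
    (f : Θ → X → ℝ) (hf : ∀ θ, IsDensity (P θ) μ (f θ))
    (hsuff : IsSufficientStat P T)
    (Θ₀ : Set Θ) (hne : Θ₀.Nonempty) (hcount : Θ₀.Countable)
    (hD : ∀ x y : X, y ∈ DSet f x Θ₀ → T x = T y) :
    IsMinimalSufficientStat P T := by
  obtain ⟨-, -, Y, _, _, γ, hγ, hγ_surj⟩ := hX
  exact ⟨hsuff, fun S' _ S hS ↦ method_3_1_general hac hγ hγ_surj hT hf hcount hD hS⟩
end
end

section
/- Method 3.2 (generalized Sato criterion). Let ℰ = (𝒳, Σ, {P_θ}_{θ∈Θ}) be a statistical model, μ a σ-finite measure on (𝒳,Σ) with P_θ ≪ μ for every θ, (𝒳,Σ) an analytic Borel space, (𝒯,Σ_𝒯) a separable measurable space, T : 𝒳 → 𝒯 measurable, and for each θ ∈ Θ let f_θ : 𝒳 → ℝ be a density of P_θ with respect to μ. Suppose there exists a nonempty countable subset Θ₀ ⊆ Θ such that for each θ ∈ Θ there is a sequence (θ_n)_{n∈ℕ} in Θ₀ with lim_{n→∞} f_{θ_n} existing in ℝ μ-a.e. and,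 for every x ∈ 𝒳, f_θ(x) = lim_{n→∞} f_{θ_n}(x) if this limit exists and f_θ(x) = 0 otherwise. Define D(x) := {y ∈ 𝒳 : ∃ h_{xy} ∈ (0,∞) with f_θ(y) = f_θ(x)·h_{xy} for every θ ∈ Θ}. If for all x, y ∈ 𝒳 one has T(x) = T(y) if and only if y ∈ D(x), then T is minimal sufficient. -/
open MeasureTheory

noncomputable section

universe u v w u'

/-!
Give the countably many `P i`, `i ∈ Θ₀`, positive weights such that their mixture `l` is finite.

*Sufficiency.* A common factor of all densities cancels in `dP θ / dl`, so these relative densities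
are functions of `T`. Blackwell's theorem, a consequence of the separation of disjoint analytic
sets, makes them `σ(T)`-measurable, and then the conditional probabilities of `l` given `T` serve
for every `P θ`, as in the Halmos–Savage factorization.

*Minimality.* If `S` is sufficient, the common conditional probabilities given `S` serve for `l`
too, so each `dP i / dl` is `l`-a.e. a function of `S`, and hence so are the ratios `f i / f j` over
`Θ₀`. These ratios determine the proportionality class of a point, first over `Θ₀` and then, passing
to the limit, over `Θ`; that is, they determine `T`. The range of the map formed by the ratios is
analytic, so by Lusin's theorem it is measurable up to a null set, and `T` is `l`-a.e. a measurable
function of the ratios.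
-/

section AnalyticSet

/-- The closed set of sequences whose first `n` terms are bounded by those of `c`; these boxes
decrease to the compact set `Set.Iic c`. -/
def prefixBox (c : ℕ → ℕ) (n : ℕ) : Set (ℕ → ℕ) :=
  {x | ∀ i < n, x i ≤ c i}

lemma prefixBox_zero (c : ℕ → ℕ) : prefixBox c 0 = Set.univ := by
  simp [prefixBox]

lemma prefixBox_succ (c : ℕ → ℕ) (n : ℕ) :
    prefixBox c (n + 1) = prefixBox c n ∩ {x | x n ≤ c n} := by
  ext x
  exact Nat.forall_lt_succ_right

lemma exists_forall_prefixBox {p : Set (ℕ → ℕ) → Prop} (p_univ : p Set.univ)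
    (p_inter : ∀ s n, p s → ∃ b, p (s ∩ {x | x n ≤ b})) :
    ∃ c, ∀ n, p (prefixBox c n) := by
  choose! b hb using p_inter
  let D : ℕ → Set (ℕ → ℕ) := fun n => n.rec Set.univ fun n s => s ∩ {x | x n ≤ b s n}
  have p_D (n : ℕ) : p (D n) := by
    induction n with
    | zero => exact p_univ
    | succ n ih => exact hb _ _ ih
  refine ⟨fun n => b (D n) n, fun n => ?_⟩
  convert p_D n
  induction n with
  | zero => exact prefixBox_zero _
  | succ n ih => rw [prefixBox_succ, ih]

lemma isCompact_Iic_of_orderBot {α : Type*} [Preorder α] [OrderBot α] [TopologicalSpace α]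
    [CompactIccSpace α] (a : α) : IsCompact (Set.Iic a) :=
  Set.Icc_bot (a := a) ▸ isCompact_Icc

lemma exists_prefixBox_subset {c : ℕ → ℕ} {V : Set (ℕ → ℕ)} (hV : IsOpen V)
    (hcV : Set.Iic c ⊆ V) : ∃ n, prefixBox c n ⊆ V := by
  let _ := PiNat.metricSpaceNatNat
  obtain ⟨δ, hδ, hδV⟩ := (isCompact_Iic_of_orderBot c).exists_thickening_subset_open hV hcV
  obtain ⟨n, hn⟩ := exists_pow_lt_of_lt_one hδ (one_half_lt_one (α := ℝ))
  refine ⟨n, fun x hx => hδV (Metric.mem_thickening_iff.2 ⟨x ⊓ c, Set.mem_Iic.2 inf_le_right, ?_⟩)⟩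
  have mem_cylinder : x ∈ PiNat.cylinder (x ⊓ c) n := fun i hi => by
    simpa using hx i hi
  exact (PiNat.mem_cylinder_iff_dist_le.1 mem_cylinder).trans_lt hn

variable {Z : Type*} [TopologicalSpace Z] [MeasurableSpace Z]

lemma exists_isCompact_subset_range_le_measure_s1 (ρ : Measure Z) [ρ.OuterRegular]
    {F : (ℕ → ℕ) → Z} (hF : Continuous F) {α : ENNReal} (hα : α < ρ (Set.range F)) :
    ∃ K ⊆ Set.range F, IsCompact K ∧ α ≤ ρ K := by
  have bound_coordinate (s : Set (ℕ → ℕ)) (n : ℕ) (hs : α < ρ (F '' s)) :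
      ∃ b, α < ρ (F '' (s ∩ {x | x n ≤ b})) := by
    have mono : Monotone fun b => F '' (s ∩ {x | x n ≤ b}) := fun b b' hb =>
      Set.image_mono (Set.inter_subset_inter_right s fun x (hx : x n ≤ b) => hx.trans hb)
    have iUnion_eq : ⋃ b, s ∩ {x | x n ≤ b} = s :=
      Set.Subset.antisymm (Set.iUnion_subset fun b => Set.inter_subset_left)
        fun x hx => Set.mem_iUnion.2 ⟨x n, hx, le_refl (x n)⟩
    rw [← iUnion_eq, Set.image_iUnion, mono.measure_iUnion] at hs
    exact lt_iSup_iff.1 hs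
  obtain ⟨c, hc⟩ := exists_forall_prefixBox (p := fun s => α < ρ (F '' s))
    (by rwa [Set.image_univ]) bound_coordinate
  refine ⟨F '' Set.Iic c, Set.image_subset_range _ _, (isCompact_Iic_of_orderBot c).image hF, ?_⟩
  rw [Set.measure_eq_iInf_isOpen]
  refine le_iInf fun U => le_iInf fun hcU => le_iInf fun hU => ?_
  obtain ⟨n, hn⟩ := exists_prefixBox_subset (hU.preimage hF) (Set.image_subset_iff.1 hcU)
  exact (hc n).le.trans (measure_mono (Set.image_subset_iff.2 hn))

lemma nullMeasurableSet_of_analyticSet_s1 [PolishSpace Z] [BorelSpace Z] (ρ : Measure Z) [SFinite ρ]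
    {A : Set Z} (hA : AnalyticSet A) : NullMeasurableSet A ρ := by
  refine NullMeasurableSet.mono_ac (μ := ρ.toFinite) ?_ (absolutelyContinuous_toFinite ρ)
  rw [AnalyticSet] at hA
  obtain rfl | ⟨F, hF, rfl⟩ := hA
  · exact MeasurableSet.empty.nullMeasurableSet
  obtain h0 | hpos := eq_zero_or_pos (ρ.toFinite (Set.range F))
  · exact NullMeasurableSet.of_null h0
  obtain ⟨a, -, ha, ha_tendsto⟩ := exists_seq_strictMono_tendsto' hpos
  choose K hKF hK haK using fun n =>
    exists_isCompact_subset_range_le_measure_s1 ρ.toFinite hF (ha n).2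
  have measurable_iUnion : MeasurableSet (⋃ n, K n) :=
    .iUnion fun n => (hK n).measurableSet
  have range_le : ρ.toFinite (Set.range F) ≤ ρ.toFinite (⋃ n, K n) :=
    le_of_tendsto' ha_tendsto fun n => (haK n).trans (measure_mono (Set.subset_iUnion K n))
  exact measurable_iUnion.nullMeasurableSet.congr
    (ae_eq_of_subset_of_measure_ge (Set.iUnion_subset hKF) range_le
      measurable_iUnion.nullMeasurableSet (measure_ne_top _ _))

end AnalyticSet

section FactorsThrough

variable {X Y Z W : Type*} [MeasurableSpace X] [MeasurableSpace Y] [StandardBorelSpace Y]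
  [MeasurableSpace Z] [MeasurableSpace W] {g : Y → X} {R : X → Z} {T : X → W}

lemma measurable_comp_rangeSplitting_of_factorsThrough [MeasurableSpace.CountablySeparated Z]
    (hg : Measurable g) (hg_surj : Function.Surjective g) (hR : Measurable R) (hT : Measurable T)
    (hTR : T.FactorsThrough R) : Measurable (T ∘ Set.rangeSplitting R) := by
  have : MeasurableSpace.CountablySeparated (Set.range R) :=
    MeasurableSpace.Subtype.countablySeparated
  have measurable_range : Measurable (Set.rangeFactorization R ∘ g) :=
    (hR.comp hg).subtype_mk
  rw [← measurable_range.measurable_comp_iff_of_surjective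
    (Set.rangeFactorization_surjective.comp hg_surj)]
  have comp_eq : (T ∘ Set.rangeSplitting R) ∘ Set.rangeFactorization R ∘ g = T ∘ g :=
    funext fun y => hTR (Set.apply_rangeSplitting R _)
  rw [comp_eq]
  exact hT.comp hg

lemma measurable_comap_of_factorsThrough [MeasurableSpace.CountablySeparated Z]
    (hg : Measurable g) (hg_surj : Function.Surjective g) (hR : Measurable R) (hT : Measurable T)
    (hTR : T.FactorsThrough R) : Measurable[MeasurableSpace.comap R inferInstance] T := by
  have comp_eq : (T ∘ Set.rangeSplitting R) ∘ Set.rangeFactorization R = T :=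
    funext fun x => hTR (Set.apply_rangeSplitting R _)
  rw [← comp_eq]
  exact (measurable_comp_rangeSplitting_of_factorsThrough hg hg_surj hR hT hTR).comp
    (comap_measurable R).subtype_mk

lemma exists_measurable_ae_eq_comp_of_factorsThrough [StandardBorelSpace Z] [Nonempty W]
    (l : Measure X) [SFinite l] (hg : Measurable g) (hg_surj : Function.Surjective g)
    (hR : Measurable R) (hT : Measurable T) (hTR : T.FactorsThrough R) :
    ∃ φ : Z → W, Measurable φ ∧ T =ᵐ[l] φ ∘ R := by
  classical
  let _ := upgradeStandardBorel Z
  have analytic_range : AnalyticSet (Set.range R) := by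
    rw [← hg_surj.range_comp R, ← Set.image_univ]
    exact MeasurableSet.univ.analyticSet_image (hR.comp hg)
  obtain ⟨B, hBR, hB, hB_ae⟩ := (nullMeasurableSet_of_analyticSet_s1 (l.map R)
    analytic_range).exists_measurable_subset_ae_eq
  refine ⟨fun z => if hz : z ∈ B then T (Set.rangeSplitting R ⟨z, hBR hz⟩)
    else Classical.arbitrary W, ?_, ?_⟩
  · exact Measurable.dite
      ((measurable_comp_rangeSplitting_of_factorsThrough hg hg_surj hR hT hTR).comp
        (measurable_inclusion hBR)) measurable_const hB
  · filter_upwards [ae_of_ae_map hR.aemeasurable hB_ae.mem_iff] with x hx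
    have hxB : R x ∈ B := hx.2 (Set.mem_range_self x)
    simp only [Function.comp_apply, dif_pos hxB]
    exact (hTR (Set.apply_rangeSplitting R _)).symm

end FactorsThrough

section CondProb

/-- `κ` is a version of the conditional probability of the event `E` given `m` under `μ`, in
Kolmogorov's sense. With `ENNReal`-valued versions no integrability is needed, so that the notion
passes to mixtures and to measures with an `m`-measurable density. -/
structure IsCondProb_s1 {X : Type*} (m : MeasurableSpace X) {mX : MeasurableSpace X}
    (μ : Measure X) (E : Set X) (κ : X → ENNReal) : Prop where
  measurable : Measurable[m] κ
  measure_inter : ∀ A, MeasurableSet[m] A → μ (A ∩ E) = ∫⁻ x in A, κ x ∂μ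

variable {X ι : Type*} {m mX : MeasurableSpace X} {μ ν : Measure X} {E : Set X} {κ : X → ENNReal}

lemma setIntegral_indicator_one [IsFiniteMeasure μ] (hE : MeasurableSet E) (A : Set X) :
    ∫ x in A, E.indicator (fun _ => (1 : ℝ)) x ∂μ = μ.real (A ∩ E) := by
  rw [integral_indicator_const _ hE, smul_eq_mul, mul_one, measureReal_restrict_apply hE,
    Set.inter_comm]

lemma isCondProb_ofReal_of_condExp_ae_eq [IsFiniteMeasure μ] (hm : m ≤ mX) (hE : MeasurableSet E)
    {φ : X → ℝ} (hφ : Measurable[m] φ) (hEφ : μ[E.indicator (fun _ => (1 : ℝ)) | m] =ᵐ[μ] φ) :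
    IsCondProb_s1 m μ E fun x => ENNReal.ofReal (φ x) := by
  have integrable_indicator : Integrable (E.indicator fun _ => (1 : ℝ)) μ :=
    (integrable_const 1).indicator hE
  have integrable_φ : Integrable φ μ := integrable_condExp.congr hEφ
  have φ_nonneg : 0 ≤ᵐ[μ] φ :=
    (condExp_nonneg (.of_forall (Set.indicator_nonneg fun _ _ => zero_le_one))).trans_eq hEφ
  refine ⟨hφ.ennreal_ofReal, fun A hA => ?_⟩
  rw [← ofReal_integral_eq_lintegral_ofReal integrable_φ.integrableOn
    (ae_restrict_of_ae φ_nonneg), ← integral_congr_ae (ae_restrict_of_ae hEφ),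
    setIntegral_condExp hm integrable_indicator hA, setIntegral_indicator_one hE,
    ofReal_measureReal]

lemma exists_isCondProb [IsFiniteMeasure μ] (hm : m ≤ mX) (hE : MeasurableSet E) :
    ∃ κ, IsCondProb_s1 m μ E κ :=
  ⟨_, isCondProb_ofReal_of_condExp_ae_eq hm hE stronglyMeasurable_condExp.measurable .rfl⟩

namespace IsCondProb_s1

lemma lintegral_eq_measure (h : IsCondProb_s1 m μ E κ) : ∫⁻ x, κ x ∂μ = μ E := by
  simpa using (h.measure_inter Set.univ MeasurableSet.univ).symm

lemma condExp_ae_eq [IsFiniteMeasure μ] (h : IsCondProb_s1 m μ E κ) (hm : m ≤ mX)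
    (hE : MeasurableSet E) :
    μ[E.indicator (fun _ => (1 : ℝ)) | m] =ᵐ[μ] fun x => (κ x).toReal := by
  have lintegral_ne_top : ∫⁻ x, κ x ∂μ ≠ ⊤ := h.lintegral_eq_measure ▸ measure_ne_top μ E
  have measurable_κ : Measurable κ := h.measurable.mono hm le_rfl
  have integrable_κ : Integrable (fun x => (κ x).toReal) μ :=
    integrable_toReal_of_lintegral_ne_top measurable_κ.aemeasurable lintegral_ne_top
  refine (ae_eq_condExp_of_forall_setIntegral_eq hm ((integrable_const 1).indicator hE)
    (fun _ _ _ => integrable_κ.integrableOn) (fun A hA _ => ?_)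
    h.measurable.ennreal_toReal.stronglyMeasurable.aestronglyMeasurable).symm
  rw [integral_toReal measurable_κ.aemeasurable
    (ae_restrict_of_ae (ae_lt_top measurable_κ lintegral_ne_top)), ← h.measure_inter A hA,
    setIntegral_indicator_one hE, measureReal_def]

lemma smul (h : IsCondProb_s1 m μ E κ) (a : ENNReal) : IsCondProb_s1 m (a • μ) E κ where
  measurable := h.measurable
  measure_inter A hA := by
    rw [Measure.restrict_smul, lintegral_smul_measure, Measure.smul_apply, h.measure_inter A hA]

lemma sum {μ : ι → Measure X} (hm : m ≤ mX) (hE : MeasurableSet E) (hκ : Measurable[m] κ)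
    (h : ∀ i, IsCondProb_s1 m (μ i) E κ) : IsCondProb_s1 m (Measure.sum μ) E κ where
  measurable := hκ
  measure_inter A hA := by
    rw [Measure.restrict_sum _ (hm A hA), lintegral_sum_measure,
      Measure.sum_apply _ ((hm A hA).inter hE)]
    exact tsum_congr fun i => (h i).measure_inter A hA

lemma setLIntegral_eq (h : IsCondProb_s1 m μ E κ) (hm : m ≤ mX) {ψ : X → ENNReal}
    (hψ : Measurable[m] ψ) : ∫⁻ x in E, ψ x ∂μ = ∫⁻ x, κ x * ψ x ∂μ := by
  have trim_eq : (μ.restrict E).trim hm = (μ.withDensity κ).trim hm := by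
    refine @Measure.ext _ m _ _ fun A hA => ?_
    rw [trim_measurableSet_eq hm hA, trim_measurableSet_eq hm hA, Measure.restrict_apply (hm A hA),
      withDensity_apply _ (hm A hA), h.measure_inter A hA]
  rw [← lintegral_trim hm hψ, trim_eq, lintegral_trim hm hψ]
  exact lintegral_withDensity_eq_lintegral_mul μ (h.measurable.mono hm le_rfl)
    (hψ.mono hm le_rfl)

lemma withDensity (h : IsCondProb_s1 m μ E κ) (hm : m ≤ mX) (hE : MeasurableSet E)
    {ψ : X → ENNReal} (hψ : Measurable[m] ψ) : IsCondProb_s1 m (μ.withDensity ψ) E κ where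
  measurable := h.measurable
  measure_inter A hA := by
    have measurable_κ : Measurable κ := h.measurable.mono hm le_rfl
    have measurable_ψ : Measurable ψ := hψ.mono hm le_rfl
    calc μ.withDensity ψ (A ∩ E) = ∫⁻ x in E, A.indicator ψ x ∂μ := by
          rw [withDensity_apply _ ((hm A hA).inter hE), setLIntegral_indicator (hm A hA)]
      _ = ∫⁻ x, κ x * A.indicator ψ x ∂μ := h.setLIntegral_eq hm (hψ.indicator hA)
      _ = ∫⁻ x in A, ψ x * κ x ∂μ := by
          rw [← lintegral_indicator (hm A hA)]
          exact lintegral_congr fun x => by rw [mul_comm, ← Set.indicator_mul_left]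
      _ = ∫⁻ x in A, κ x ∂(μ.withDensity ψ) :=
          (setLIntegral_withDensity_eq_setLIntegral_mul μ measurable_ψ measurable_κ
            (hm A hA)).symm

end IsCondProb_s1

lemma eq_of_forall_exists_isCondProb (hm : m ≤ mX) (trim_eq : μ.trim hm = ν.trim hm)
    (h : ∀ E, MeasurableSet E → ∃ κ, IsCondProb_s1 m μ E κ ∧ IsCondProb_s1 m ν E κ) : μ = ν := by
  ext E hE
  obtain ⟨κ, hμ, hν⟩ := h E hE
  rw [← hμ.lintegral_eq_measure, ← hν.lintegral_eq_measure, ← lintegral_trim hm hμ.measurable,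
    trim_eq, lintegral_trim hm hμ.measurable]

end CondProb

section Mixture

variable {X ι : Type*}

/-- The density of a mixture of measures with densities `g i`. -/
def mixtureDensity (c : ι → ENNReal) (g : ι → X → ENNReal) (x : X) : ENNReal :=
  ∑' i, c i * g i x

variable {c : ι → ENNReal} {g : ι → X → ENNReal}

lemma mixtureDensity_eq_zero_iff (hc : ∀ i, c i ≠ 0) {x : X} :
    mixtureDensity c g x = 0 ↔ ∀ i, g i x = 0 := by
  simp [mixtureDensity, hc]

lemma mixtureDensity_eq_mul {x y : X} {a : ENNReal} (h : ∀ i, g i y = g i x * a) :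
    mixtureDensity c g y = mixtureDensity c g x * a := by
  simp only [mixtureDensity, h, ← mul_assoc, ENNReal.tsum_mul_right]

/-- The mixture of the measures `Q i` with weights `c i`, not required to sum to one. -/
def mixture [MeasurableSpace X] (c : ι → ENNReal) (Q : ι → Measure X) : Measure X :=
  Measure.sum fun i => c i • Q i

variable [MeasurableSpace X] {μ : Measure X}

lemma exists_isFiniteMeasure_mixture [Countable ι] (Q : ι → Measure X)
    [∀ i, IsFiniteMeasure (Q i)] : ∃ c, (∀ i, c i ≠ 0) ∧ IsFiniteMeasure (mixture c Q) := by
  obtain ⟨c, hc, hcQ⟩ := ENNReal.exists_pos_tsum_mul_lt_of_countable one_ne_zero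
    (fun i => Q i Set.univ) fun i => measure_ne_top _ _
  refine ⟨fun i => c i, fun i => ENNReal.coe_ne_zero.2 (hc i).ne', ⟨?_⟩⟩
  rw [mixture, Measure.sum_apply _ MeasurableSet.univ]
  simp only [Measure.smul_apply, smul_eq_mul, mul_comm (c _ : ENNReal)]
  exact hcQ.trans ENNReal.one_lt_top

lemma measurable_mixtureDensity [Countable ι] (hg : ∀ i, Measurable (g i)) :
    Measurable (mixtureDensity c g) :=
  .tsum fun i => (hg i).const_mul (c i)

lemma mixture_withDensity [Countable ι] (hg : ∀ i, Measurable (g i)) :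
    mixture c (fun i => μ.withDensity (g i)) = μ.withDensity (mixtureDensity c g) := by
  have density_eq : mixtureDensity c g = ∑' i, c i • g i := by
    ext x
    rw [tsum_apply (Pi.summable.2 fun _ => ENNReal.summable)]
    rfl
  rw [density_eq, withDensity_tsum fun i => (hg i).const_smul (c i), mixture]
  simp only [withDensity_smul _ (hg _)]

lemma withDensity_eq_withDensity_withDensity_div {h q : X → ENNReal} (hh : Measurable h)
    (hq : Measurable q) (q_ne_top : ∀ᵐ x ∂μ, q x ≠ ⊤) (h_eq_zero : ∀ x, q x = 0 → h x = 0) :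
    μ.withDensity h = (μ.withDensity q).withDensity fun x => h x / q x := by
  refine Eq.trans ?_ (withDensity_mul μ hq (hh.div hq))
  refine withDensity_congr_ae ?_
  filter_upwards [q_ne_top] with x hx
  exact (ENNReal.mul_div_cancel' (h_eq_zero x) fun h_top => absurd h_top hx).symm

lemma ae_ne_top_of_isFiniteMeasure_withDensity {q : X → ENNReal} (hq : Measurable q)
    [IsFiniteMeasure (μ.withDensity q)] : ∀ᵐ x ∂μ, q x ≠ ⊤ := by
  refine (ae_lt_top hq ?_).mono fun _ => LT.lt.ne
  rw [← setLIntegral_univ, ← withDensity_apply _ MeasurableSet.univ]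
  exact measure_ne_top _ _

end Mixture

section SufficientSubalgebra

variable {X Θ ι : Type*} {m mX : MeasurableSpace X} {P : Θ → Measure X}

lemma isSufficientStat_iff {T' : Type*} [mT : MeasurableSpace T'] {T : X → T'} :
    IsSufficientStat P T ↔
      Measurable T ∧ IsSufficientSubalgebra P (MeasurableSpace.comap T mT) := by
  refine and_congr_right fun hT => ⟨fun h => ⟨hT.comap_le, fun E hE => ?_⟩, fun h E hE => ?_⟩
  · obtain ⟨κ, hκ, hP⟩ := h E hE
    exact ⟨κ ∘ T, hκ.comp (comap_measurable T), hP⟩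
  · obtain ⟨φ, hφ, hP⟩ := h.2 E hE
    obtain ⟨κ, hκ, rfl⟩ := hφ.exists_eq_measurable_comp
    exact ⟨κ, hκ, hP⟩

variable [∀ θ, IsFiniteMeasure (P θ)]

lemma IsSufficientSubalgebra.exists_isCondProb (h : IsSufficientSubalgebra P m) {E : Set X}
    (hE : MeasurableSet E) : ∃ κ, Measurable[m] κ ∧ ∀ θ, IsCondProb_s1 m (P θ) E κ := by
  obtain ⟨φ, hφ, hP⟩ := h.2 E hE
  exact ⟨_, hφ.ennreal_ofReal, fun θ => isCondProb_ofReal_of_condExp_ae_eq h.1 hE hφ (hP θ)⟩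

lemma isSufficientSubalgebra_of_eq_withDensity {l : Measure X} [IsFiniteMeasure l] (hm : m ≤ mX)
    {k : Θ → X → ENNReal} (hk : ∀ θ, Measurable[m] (k θ)) (hP : ∀ θ, P θ = l.withDensity (k θ)) :
    IsSufficientSubalgebra P m := by
  refine ⟨hm, fun E hE => ?_⟩
  obtain ⟨κ, hκ⟩ := exists_isCondProb (μ := l) hm hE
  refine ⟨fun x => (κ x).toReal, hκ.measurable.ennreal_toReal, fun θ => ?_⟩
  refine IsCondProb_s1.condExp_ae_eq ?_ hm hE
  rw [hP θ]
  exact hκ.withDensity hm hE (hk θ)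

lemma IsSufficientSubalgebra.exists_eq_withDensity_mixture
    (h : IsSufficientSubalgebra P m) {c : ι → ENNReal} {t : ι → Θ}
    [IsFiniteMeasure (mixture c fun i => P (t i))] {θ : Θ}
    (hθ : P θ ≪ mixture c fun i => P (t i)) :
    ∃ ψ : X → ENNReal, Measurable[m] ψ ∧
      P θ = (mixture c fun i => P (t i)).withDensity ψ := by
  have hm := h.1
  set l := mixture c fun i => P (t i)
  let ψ := ((P θ).trim hm).rnDeriv (l.trim hm)
  have measurable_ψ : Measurable[m] ψ := Measure.measurable_rnDeriv _ _
  refine ⟨ψ, measurable_ψ, eq_of_forall_exists_isCondProb hm ?_ fun E hE => ?_⟩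
  · rw [trim_withDensity hm measurable_ψ, Measure.withDensity_rnDeriv_eq _ _ (hθ.trim hm)]
  · obtain ⟨κ, hκ, hPκ⟩ := h.exists_isCondProb hE
    have isCondProb_l : IsCondProb_s1 m l E κ := .sum hm hE hκ fun i => (hPκ (t i)).smul (c i)
    exact ⟨κ, hPκ θ, isCondProb_l.withDensity hm hE measurable_ψ⟩

end SufficientSubalgebra

section Proportional

variable {X Θ ι : Type*} {f : Θ → X → ℝ} {Θ₀ : Set Θ} {x : X}

/-- The quotients at `x` of any two members of a family of densities. Since `a / 0 = 0`, the
quotient of a member by itself is `0` or `1` and records whether that member vanishes at `x`. -/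
def likelihoodRatio (p : ι → X → ℝ) (x : X) (ij : ι × ι) : ℝ :=
  p ij.1 x / p ij.2 x

lemma exists_pos_forall_eq_mul_of_div_eq_div {a b : ι → ℝ} (ha : ∀ i, 0 ≤ a i)
    (hb : ∀ i, 0 ≤ b i) (hab : ∀ i j, a i / a j = b i / b j) :
    ∃ h, 0 < h ∧ ∀ i, b i = a i * h := by
  have eq_zero_iff (i : ι) : a i = 0 ↔ b i = 0 := by
    rw [← or_self (a i = 0), ← div_eq_zero_iff, hab, div_eq_zero_iff, or_self]
  by_cases a_eq_zero : ∀ i, a i = 0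
  · exact ⟨1, one_pos, fun i => by rw [(eq_zero_iff i).1 (a_eq_zero i), a_eq_zero, zero_mul]⟩
  obtain ⟨j, hj⟩ := not_forall.1 a_eq_zero
  have hbj : b j ≠ 0 := mt (eq_zero_iff j).2 hj
  refine ⟨b j / a j, div_pos ((hb j).lt_of_ne' hbj) ((ha j).lt_of_ne' hj), fun i => ?_⟩
  calc b i = b i / b j * b j := (div_mul_cancel₀ _ hbj).symm
    _ = a i / a j * b j := by rw [hab]
    _ = a i * (b j / a j) := by rw [div_mul_eq_mul_div, mul_div_assoc]

lemma mem_DSet_of_likelihoodRatio_eq (hf : ∀ θ x, 0 ≤ f θ x) {y : X}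
    (hxy : likelihoodRatio (fun i : Θ₀ => f i) x = likelihoodRatio (fun i : Θ₀ => f i) y) :
    y ∈ DSet f x Θ₀ := by
  obtain ⟨h, h_pos, hy⟩ := exists_pos_forall_eq_mul_of_div_eq_div (fun i : Θ₀ => hf i x)
    (fun i : Θ₀ => hf i y) fun i j => congr_fun hxy (i, j)
  exact ⟨h, h_pos, fun θ hθ => hy ⟨θ, hθ⟩⟩

lemma measurable_likelihoodRatio {m : MeasurableSpace X} {p : ι → X → ℝ}
    (hp : ∀ i, Measurable[m] (p i)) : Measurable[m] (likelihoodRatio p) :=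
  measurable_pi_lambda _ fun ij => (hp ij.1).div (hp ij.2)

/-- The pointwise limit of `u`, set to zero at the points where `u` diverges, is `g`. -/
def IsLimitOrZero (u : ℕ → X → ℝ) (g : X → ℝ) : Prop :=
  ∀ x, ((∃ L, Filter.Tendsto (fun n => u n x) Filter.atTop (nhds L)) →
      Filter.Tendsto (fun n => u n x) Filter.atTop (nhds (g x))) ∧
    ((¬ ∃ L, Filter.Tendsto (fun n => u n x) Filter.atTop (nhds L)) → g x = 0)

lemma IsLimitOrZero.eq_mul {u : ℕ → X → ℝ} {g : X → ℝ} (hg : IsLimitOrZero u g) {y : X} {h : ℝ}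
    (h_ne_zero : h ≠ 0) (hu : ∀ n, u n y = u n x * h) : g y = g x * h := by
  by_cases hx : ∃ L, Filter.Tendsto (fun n => u n x) Filter.atTop (nhds L)
  · have tendsto_y : Filter.Tendsto (fun n => u n y) Filter.atTop (nhds (g x * h)) := by
      simpa only [hu] using ((hg x).1 hx).mul_const h
    exact tendsto_nhds_unique ((hg y).1 ⟨_, tendsto_y⟩) tendsto_y
  · have hy : ¬ ∃ L, Filter.Tendsto (fun n => u n y) Filter.atTop (nhds L) := fun ⟨L, hL⟩ =>
      hx ⟨L / h, (hL.div_const h).congr fun n => by rw [hu, mul_div_cancel_right₀ _ h_ne_zero]⟩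
    rw [(hg x).2 hx, (hg y).2 hy, zero_mul]

lemma IsLimitOrZero.eq_zero {u : ℕ → X → ℝ} {g : X → ℝ} (hg : IsLimitOrZero u g)
    (hu : ∀ n, u n x = 0) : g x = 0 := by
  have tendsto_zero : Filter.Tendsto (fun n => u n x) Filter.atTop (nhds 0) := by
    simp only [hu, tendsto_const_nhds]
  exact tendsto_nhds_unique ((hg x).1 ⟨0, tendsto_zero⟩) tendsto_zero

lemma DSet_subset_DSet_univ
    (happrox : ∀ θ, ∃ s : ℕ → Θ, (∀ n, s n ∈ Θ₀) ∧ IsLimitOrZero (fun n => f (s n)) (f θ)) :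
    DSet f x Θ₀ ⊆ DSet f x Set.univ := fun _ ⟨h, h_pos, hy⟩ => by
  refine ⟨h, h_pos, fun θ _ => ?_⟩
  obtain ⟨s, hs, hθ⟩ := happrox θ
  exact hθ.eq_mul h_pos.ne' fun n => hy _ (hs n)

end Proportional

section SatoCriterion

variable {X Θ : Type*} {f : Θ → X → ℝ} {Θ₀ : Set Θ} {c : Θ₀ → ENNReal}

/-- The density of the mixture of the `P θ`, `θ ∈ Θ₀`, built from the densities `f` of the
model. -/
def modelMixtureDensity (c : Θ₀ → ENNReal) (f : Θ → X → ℝ) : X → ENNReal :=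
  mixtureDensity c fun i x => ENNReal.ofReal (f i x)

/-- The density of `P θ` with respect to the mixture of the `P θ`, `θ ∈ Θ₀`, built from the
densities `f` of the model. -/
def relativeDensity (c : Θ₀ → ENNReal) (f : Θ → X → ℝ) (θ : Θ) (x : X) : ENNReal :=
  ENNReal.ofReal (f θ x) / modelMixtureDensity c f x

lemma relativeDensity_eq_of_mem_DSet {x y : X} (hy : y ∈ DSet f x Set.univ) (θ : Θ) :
    relativeDensity c f θ y = relativeDensity c f θ x := by
  obtain ⟨h, h_pos, hfy⟩ := hy
  have ofReal_eq (θ : Θ) : ENNReal.ofReal (f θ y) = ENNReal.ofReal (f θ x) * ENNReal.ofReal h := by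
    rw [hfy θ (Set.mem_univ θ), ENNReal.ofReal_mul' h_pos.le]
  rw [relativeDensity, relativeDensity, modelMixtureDensity,
    mixtureDensity_eq_mul fun i : Θ₀ => ofReal_eq i, ofReal_eq θ]
  exact ENNReal.mul_div_mul_right _ _ (ENNReal.ofReal_pos.2 h_pos).ne' ENNReal.ofReal_ne_top

lemma likelihoodRatio_eq_toReal_relativeDensity (hf : ∀ θ x, 0 ≤ f θ x) {x : X}
    (hx : modelMixtureDensity c f x ≠ 0 ∧ modelMixtureDensity c f x ≠ ⊤) :
    likelihoodRatio (fun i : Θ₀ => f i) x =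
      likelihoodRatio (fun (i : Θ₀) x => (relativeDensity c f i x).toReal) x := by
  funext ij
  simp only [likelihoodRatio, relativeDensity, ENNReal.toReal_div, ENNReal.toReal_ofReal (hf _ _)]
  exact (div_div_div_cancel_right₀ (ENNReal.toReal_ne_zero.2 hx) _ _).symm

variable {m : MeasurableSpace X} [MeasurableSpace X] {P : Θ → Measure X} {μ : Measure X}
  [Countable Θ₀] (hf : ∀ θ, IsDensity (P θ) μ (f θ))
include hf

lemma measurable_modelMixtureDensity : Measurable (modelMixtureDensity c f) :=
  measurable_mixtureDensity fun i => (hf i).1.ennreal_ofReal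

lemma measurable_relativeDensity (θ : Θ) : Measurable (relativeDensity c f θ) :=
  (hf θ).1.ennreal_ofReal.div (measurable_modelMixtureDensity hf)

lemma mixture_eq_withDensity_modelMixtureDensity :
    mixture c (fun i : Θ₀ => P i) = μ.withDensity (modelMixtureDensity c f) := by
  rw [modelMixtureDensity, ← mixture_withDensity fun i : Θ₀ => (hf i).1.ennreal_ofReal]
  simp only [← (hf _).2.2]

section FiniteMixture

variable [IsFiniteMeasure (mixture c fun i : Θ₀ => P i)]

lemma ae_modelMixtureDensity_ne_top : ∀ᵐ x ∂μ, modelMixtureDensity c f x ≠ ⊤ := by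
  have : IsFiniteMeasure (μ.withDensity (modelMixtureDensity c f)) :=
    mixture_eq_withDensity_modelMixtureDensity (c := c) hf ▸ inferInstance
  exact ae_ne_top_of_isFiniteMeasure_withDensity (measurable_modelMixtureDensity hf)

lemma ae_mixture_modelMixtureDensity_ne_zero_and_ne_top :
    ∀ᵐ x ∂mixture c fun i : Θ₀ => P i,
      modelMixtureDensity c f x ≠ 0 ∧ modelMixtureDensity c f x ≠ ⊤ := by
  rw [mixture_eq_withDensity_modelMixtureDensity hf,
    ae_withDensity_iff (measurable_modelMixtureDensity hf)]
  filter_upwards [ae_modelMixtureDensity_ne_top (c := c) hf] with x hx h_ne_zero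
  exact ⟨h_ne_zero, hx⟩

lemma eq_withDensity_relativeDensity (hc : ∀ i, c i ≠ 0) {θ : Θ}
    (hθ : ∀ x, (∀ i ∈ Θ₀, f i x = 0) → f θ x = 0) :
    P θ = (mixture c fun i : Θ₀ => P i).withDensity (relativeDensity c f θ) := by
  rw [mixture_eq_withDensity_modelMixtureDensity hf]
  refine (hf θ).2.2.trans (withDensity_eq_withDensity_withDensity_div (hf θ).1.ennreal_ofReal
    (measurable_modelMixtureDensity hf) (ae_modelMixtureDensity_ne_top hf) fun x hx => ?_)
  rw [hθ x, ENNReal.ofReal_zero]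
  intro i hi
  exact le_antisymm (ENNReal.ofReal_eq_zero.1 ((mixtureDensity_eq_zero_iff hc).1 hx ⟨i, hi⟩))
    ((hf i).2.1 x)

lemma absolutelyContinuous_mixture (hc : ∀ i, c i ≠ 0) {θ : Θ}
    (hθ : ∀ x, (∀ i ∈ Θ₀, f i x = 0) → f θ x = 0) : P θ ≪ mixture c fun i : Θ₀ => P i :=
  eq_withDensity_relativeDensity hf hc hθ ▸ withDensity_absolutelyContinuous _ _

variable [∀ θ, IsFiniteMeasure (P θ)]

lemma exists_measurable_relativeDensity_ae_eq (hc : ∀ i, c i ≠ 0) (hm : IsSufficientSubalgebra P m)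
    {θ : Θ} (hθ : ∀ x, (∀ i ∈ Θ₀, f i x = 0) → f θ x = 0) :
    ∃ ψ : X → ENNReal, Measurable[m] ψ ∧
      relativeDensity c f θ =ᵐ[mixture c fun i : Θ₀ => P i] ψ := by
  have P_eq := eq_withDensity_relativeDensity hf hc hθ
  have lintegral_ne_top : ∫⁻ x, relativeDensity c f θ x ∂(mixture c fun i : Θ₀ => P i) ≠ ⊤ := by
    rw [← setLIntegral_univ, ← withDensity_apply _ MeasurableSet.univ, ← P_eq]
    exact measure_ne_top _ _
  obtain ⟨ψ, hψ, hPψ⟩ :=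
    hm.exists_eq_withDensity_mixture (absolutelyContinuous_mixture hf hc hθ)
  refine ⟨ψ, hψ, (withDensity_eq_iff (measurable_relativeDensity hf θ).aemeasurable
    (hψ.mono hm.1 le_rfl).aemeasurable lintegral_ne_top).1 ?_⟩
  rw [← P_eq, ← hPψ]

lemma exists_measurable_likelihoodRatio_ae_eq (hc : ∀ i, c i ≠ 0)
    (hm : IsSufficientSubalgebra P m) :
    ∃ ρ : X → Θ₀ × Θ₀ → ℝ, Measurable[m] ρ ∧
      likelihoodRatio (fun i : Θ₀ => f i) =ᵐ[mixture c fun i : Θ₀ => P i] ρ := by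
  choose ψ hψ relativeDensity_ae_eq using fun i : Θ₀ =>
    exists_measurable_relativeDensity_ae_eq hf hc hm fun x hx => hx i i.2
  refine ⟨likelihoodRatio fun i x => (ψ i x).toReal,
    measurable_likelihoodRatio fun i => (hψ i).ennreal_toReal, ?_⟩
  filter_upwards [ae_all_iff.2 relativeDensity_ae_eq,
    ae_mixture_modelMixtureDensity_ne_zero_and_ne_top hf] with x hx_eq hx
  rw [likelihoodRatio_eq_toReal_relativeDensity (fun θ => (hf θ).2.1) hx]
  simp only [funext_iff, likelihoodRatio, hx_eq, implies_true]

end FiniteMixture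

variable [∀ θ, IsFiniteMeasure (P θ)] {T' Y : Type*} [MeasurableSpace T'] [MeasurableSpace Y]
  [StandardBorelSpace Y] {T : X → T'} {g : Y → X}

theorem isSufficientStat_of_forall_mem_DSet [MeasurableSpace.CountablySeparated T']
    (hg : Measurable g) (hg_surj : Function.Surjective g) (hT : Measurable T)
    (hΘ₀ : ∀ θ x, (∀ i ∈ Θ₀, f i x = 0) → f θ x = 0)
    (hTD : ∀ x y, T x = T y → y ∈ DSet f x Set.univ) : IsSufficientStat P T := by
  obtain ⟨c, hc, _⟩ := exists_isFiniteMeasure_mixture fun i : Θ₀ => P i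
  have measurable_comap (θ : Θ) : Measurable[.comap T inferInstance] (relativeDensity c f θ) :=
    measurable_comap_of_factorsThrough hg hg_surj hT (measurable_relativeDensity hf θ)
      fun x y hxy => (relativeDensity_eq_of_mem_DSet (hTD x y hxy) θ).symm
  exact isSufficientStat_iff.2 ⟨hT, isSufficientSubalgebra_of_eq_withDensity hT.comap_le
    measurable_comap fun θ => eq_withDensity_relativeDensity hf hc (hΘ₀ θ)⟩

theorem IsSufficientStat.exists_measurable_ae_eq_comp [Nonempty T'] {S' : Type*}
    [MeasurableSpace S'] {S : X → S'} (hS : IsSufficientStat P S) (hg : Measurable g)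
    (hg_surj : Function.Surjective g) (hT : Measurable T)
    (hΘ₀ : ∀ θ x, (∀ i ∈ Θ₀, f i x = 0) → f θ x = 0)
    (hDT : ∀ x, ∀ y ∈ DSet f x Θ₀, T x = T y) :
    ∃ φ : S' → T', Measurable φ ∧ ∀ θ, T =ᵐ[P θ] φ ∘ S := by
  obtain ⟨c, hc, _⟩ := exists_isFiniteMeasure_mixture fun i : Θ₀ => P i
  obtain ⟨ρ, hρ, ratio_ae_eq⟩ :=
    exists_measurable_likelihoodRatio_ae_eq hf hc (isSufficientStat_iff.1 hS).2
  obtain ⟨W, hW, rfl⟩ := hρ.exists_eq_measurable_comp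
  obtain ⟨φ, hφ, T_ae_eq⟩ := exists_measurable_ae_eq_comp_of_factorsThrough
    (mixture c fun i : Θ₀ => P i) hg hg_surj
    (measurable_likelihoodRatio fun i : Θ₀ => (hf i).1) hT
    fun x y hxy => hDT x y (mem_DSet_of_likelihoodRatio_eq (fun θ => (hf θ).2.1) hxy)
  refine ⟨φ ∘ W, hφ.comp hW, fun θ => ?_⟩
  exact (absolutelyContinuous_mixture hf hc (hΘ₀ θ)).ae_le (T_ae_eq.trans (ratio_ae_eq.fun_comp φ))

end SatoCriterion

theorem method_3_2_general {X Y T' Θ : Type*} [MeasurableSpace X] [MeasurableSpace Y]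
    [StandardBorelSpace Y] [MeasurableSpace T'] [MeasurableSpace.CountablySeparated T']
    [Nonempty T'] {P : Θ → Measure X} [∀ θ, IsFiniteMeasure (P θ)] {μ : Measure X}
    {f : Θ → X → ℝ} (hf : ∀ θ, IsDensity (P θ) μ (f θ)) {g : Y → X} (hg : Measurable g)
    (hg_surj : Function.Surjective g) {T : X → T'} (hT : Measurable T) {Θ₀ : Set Θ}
    (hcount : Θ₀.Countable)
    (happrox : ∀ θ, ∃ s : ℕ → Θ, (∀ n, s n ∈ Θ₀) ∧ IsLimitOrZero (fun n => f (s n)) (f θ))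
    (hiff : ∀ x y, T x = T y ↔ y ∈ DSet f x Set.univ) : IsMinimalSufficientStat P T := by
  have := hcount.to_subtype
  have hΘ₀ (θ : Θ) (x : X) (hx : ∀ i ∈ Θ₀, f i x = 0) : f θ x = 0 := by
    obtain ⟨s, hs, hθ⟩ := happrox θ
    exact hθ.eq_zero fun n => hx _ (hs n)
  refine ⟨isSufficientStat_of_forall_mem_DSet hf hg hg_surj hT hΘ₀ fun x y => (hiff x y).1,
    fun S' _ S hS => hS.exists_measurable_ae_eq_comp hf hg hg_surj hT hΘ₀ fun x y hy => ?_⟩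
  exact (hiff x y).2 (DSet_subset_DSet_univ happrox hy)

/-- Method 3.2 (generalized Sato criterion). -/
theorem method_3_2
    {X : Type u} [mX : MeasurableSpace X] {Θ : Type v} [Nonempty Θ]
    (P : Θ → Measure X) (hP : ∀ θ, IsProbabilityMeasure (P θ))
    (μ : Measure X) (hμ : SigmaFinite μ) (hac : ∀ θ, P θ ≪ μ)
    (hX : IsAnalyticBorel X)
    {T' : Type w} [mT : MeasurableSpace T']
    (hTcg : MeasurableSpace.CountablyGenerated T')
    (hTsing : MeasurableSingletonClass T')
    (T : X → T') (hT : Measurable T)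
    (f : Θ → X → ℝ) (hf : ∀ θ, IsDensity (P θ) μ (f θ))
    (Θ₀ : Set Θ) (hne : Θ₀.Nonempty) (hcount : Θ₀.Countable)
    (happrox : ∀ θ : Θ, ∃ θseq : ℕ → Θ, (∀ n, θseq n ∈ Θ₀) ∧
      (∀ᵐ x ∂μ, ∃ L : ℝ, Filter.Tendsto (fun n => f (θseq n) x) Filter.atTop (nhds L)) ∧
      (∀ x : X,
        ((∃ L : ℝ, Filter.Tendsto (fun n => f (θseq n) x) Filter.atTop (nhds L)) →
          Filter.Tendsto (fun n => f (θseq n) x) Filter.atTop (nhds (f θ x))) ∧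
        ((¬ ∃ L : ℝ, Filter.Tendsto (fun n => f (θseq n) x) Filter.atTop (nhds L)) →
          f θ x = 0)))
    (hiff : ∀ x y : X, T x = T y ↔ y ∈ DSet f x Set.univ) :
    IsMinimalSufficientStat P T := by
  obtain ⟨-, -, Y, _, _, g, hg, hg_surj⟩ := hX
  have : Nonempty T' := (nonempty_of_isProbabilityMeasure (P hne.some)).map T
  exact method_3_2_general hf hg hg_surj hT hcount
    (fun θ => (happrox θ).imp fun _ hs => ⟨hs.1, hs.2.2⟩) hiff
end
end

section
/- Method 3.3 (exponential families). Let ℰ = (𝒳, Σ, {P_θ}_{θ∈Θ}) be a statistical model and μ a σ-finite measure on (𝒳,Σ) with P_θ ≪ μ for every θ. Suppose (𝒳,Σ) is an analytic Borel space and for each θ, f_θ : 𝒳 → ℝ is a density of P_θ with respect to μ. Suppose there exist functions η₁,…,η_k, B : Θ → ℝ and measurable functions T₁,…,T_k, h : 𝒳 → ℝ such that for each θ ∈ Θ, f_θ(x) = exp[(Σ_{i=1}^k η_i(θ)·T_i(x)) − B(θ)]·h(x) for μ-a.e. x. If for any real numbers a₀, a₁, …, a_k satisfying Σ_{i=1}^k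 a_i·η_i(θ) = a₀ for every θ ∈ Θ one necessarily has a_i = 0 for every i ∈ {0,1,…,k}, then the statistic T : 𝒳 → ℝ^k given by T(x) := (T₁(x),…,T_k(x)) is minimal sufficient. -/
open MeasureTheory

noncomputable section

universe u v w u'

/-!
Relative to a base point `θ₀` the likelihood ratios are `dP θ / dP θ₀ = exp (ζ θ (T x) - c θ)` with
`ζ θ = η θ - η θ₀`. They are functions of `T`, so conditioning on `T` gives the same answer under
every `P θ`, and `T` is sufficient. Conversely, if `S` is sufficient, then `P θ` and `P θ₀` have
common conditional probabilities given `S`, which by self-adjointness of the conditional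
expectation forces `dP θ / dP θ₀` to be a function of `S`. The absence of affine relations among the
`η i` says that the functionals `ζ θ` separate points, so finitely many of them do, and `T` is
recovered linearly from finitely many log-likelihood ratios.
-/

open scoped NNReal

section ConditionalExpectation

variable {X : Type*} {m mX : MeasurableSpace X} {ν : Measure X}

theorem condExp_withDensity_of_measurable {E : Type*} [NormedAddCommGroup E] [NormedSpace ℝ E]
    [CompleteSpace E] (hm : m ≤ mX) [SigmaFinite (ν.trim hm)] {r : X → ℝ≥0}
    (hr : Measurable[m] r) {g : X → E} (hg : Integrable g ν)
    (hgr : Integrable g (ν.withDensity fun x => r x)) :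
    (ν.withDensity fun x => r x)[g | m] =ᵐ[ν.withDensity fun x => r x] ν[g | m] := by
  have hrX : Measurable r := hr.mono hm le_rfl
  have : SigmaFinite ((ν.withDensity fun x => r x).trim hm) := by
    rw [trim_withDensity hm hr.coe_nnreal_ennreal]
    infer_instance
  have hrg : Integrable ((fun x => (r x : ℝ)) • g) ν :=
    (integrable_withDensity_iff_integrable_smul hrX).1 hgr
  have pull_out : ν[(fun x => (r x : ℝ)) • g | m] =ᵐ[ν] (fun x => (r x : ℝ)) • ν[g | m] :=
    condExp_smul_of_aestronglyMeasurable_left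
      hr.coe_nnreal_real.stronglyMeasurable.aestronglyMeasurable hrg hg
  have hint : Integrable (ν[g | m]) (ν.withDensity fun x => r x) :=
    (integrable_withDensity_iff_integrable_smul hrX).2 (integrable_condExp.congr pull_out)
  refine (ae_eq_condExp_of_forall_setIntegral_eq hm hgr (fun _ _ _ => hint.integrableOn)
    (fun s hs _ => ?_) stronglyMeasurable_condExp.aestronglyMeasurable).symm
  calc ∫ x in s, (ν[g | m]) x ∂ν.withDensity (fun x => r x)
      = ∫ x in s, r x • (ν[g | m]) x ∂ν :=
        setIntegral_withDensity_eq_setIntegral_smul hrX _ (hm s hs)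
    _ = ∫ x in s, (ν[(fun x => (r x : ℝ)) • g | m]) x ∂ν :=
        integral_congr_ae (ae_restrict_of_ae pull_out.symm)
    _ = ∫ x in s, r x • g x ∂ν := setIntegral_condExp hm hrg hs
    _ = ∫ x in s, g x ∂ν.withDensity (fun x => r x) :=
        (setIntegral_withDensity_eq_setIntegral_smul hrX _ (hm s hs)).symm

theorem integral_condExp_mul_eq_integral_mul_condExp (hm : m ≤ mX) [SigmaFinite (ν.trim hm)]
    {f g : X → ℝ} (hf : Integrable f ν) (hg : Integrable g ν)
    (hfg : Integrable (ν[f | m] * g) ν) (hgf : Integrable (f * ν[g | m]) ν) :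
    ∫ x, (ν[f | m] * g) x ∂ν = ∫ x, (f * ν[g | m]) x ∂ν :=
  calc ∫ x, (ν[f | m] * g) x ∂ν
      = ∫ x, (ν[ν[f | m] * g | m]) x ∂ν := (integral_condExp hm).symm
    _ = ∫ x, (ν[f | m] * ν[g | m]) x ∂ν :=
        integral_congr_ae (condExp_mul_of_stronglyMeasurable_left stronglyMeasurable_condExp hfg hg)
    _ = ∫ x, (ν[f * ν[g | m] | m]) x ∂ν := integral_congr_ae
        (condExp_mul_of_stronglyMeasurable_right stronglyMeasurable_condExp hgf hf).symm
    _ = ∫ x, (f * ν[g | m]) x ∂ν := integral_condExp hm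

theorem setIntegral_condExp_eq_integral_mul_condExp_indicator (hm : m ≤ mX) [IsFiniteMeasure ν]
    {r : X → ℝ} (hr : Integrable r ν) {E : Set X} (hE : MeasurableSet E) :
    ∫ x in E, (ν[r | m]) x ∂ν = ∫ x, r x * (ν[E.indicator (fun _ => (1 : ℝ)) | m]) x ∂ν := by
  have hbound : ∀ᵐ x ∂ν, ‖(ν[E.indicator (fun _ => (1 : ℝ)) | m]) x‖ ≤ 1 :=
    ae_bdd_norm_condExp_of_ae_bdd_norm <| .of_forall fun x =>
      (norm_indicator_le_norm_self _ x).trans_eq norm_one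
  have hprod : Integrable (r * ν[E.indicator (fun _ => (1 : ℝ)) | m]) ν :=
    hr.mul_bdd (stronglyMeasurable_condExp.mono hm).aestronglyMeasurable hbound
  have hmul : ν[r | m] * E.indicator (fun _ => 1) = E.indicator (ν[r | m]) :=
    funext fun x => by simp [← Set.indicator_mul_right]
  rw [← integral_indicator hE, ← hmul]
  exact integral_condExp_mul_eq_integral_mul_condExp hm hr ((integrable_const 1).indicator hE)
    (hmul ▸ integrable_condExp.indicator hE) hprod

theorem ae_eq_condExp_of_condExp_indicator_withDensity_ae_eq (hm : m ≤ mX) [IsFiniteMeasure ν]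
    {r : X → ℝ≥0} (hr : Measurable r) [IsFiniteMeasure (ν.withDensity fun x => r x)]
    (h : ∀ E, MeasurableSet E → (ν.withDensity fun x => r x)[E.indicator (fun _ => (1 : ℝ)) | m]
      =ᵐ[ν.withDensity fun x => r x] ν[E.indicator (fun _ => (1 : ℝ)) | m]) :
    (fun x => (r x : ℝ)) =ᵐ[ν] ν[fun x => (r x : ℝ) | m] := by
  set Q := ν.withDensity fun x => r x
  have hr_int : Integrable (fun x => (r x : ℝ)) ν := by
    simpa [NNReal.smul_def] using
      (integrable_withDensity_iff_integrable_smul hr).1 (integrable_const (μ := Q) (1 : ℝ))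
  refine hr_int.ae_eq_of_forall_setIntegral_eq _ _ integrable_condExp fun E hE _ => ?_
  calc ∫ x in E, (r x : ℝ) ∂ν = ∫ _ in E, (1 : ℝ) ∂Q := by
        simp [Q, setIntegral_withDensity_eq_setIntegral_smul hr _ hE, NNReal.smul_def]
    _ = ∫ x, E.indicator (fun _ => (1 : ℝ)) x ∂Q := (integral_indicator hE).symm
    _ = ∫ x, (Q[E.indicator (fun _ => (1 : ℝ)) | m]) x ∂Q := (integral_condExp hm).symm
    _ = ∫ x, (ν[E.indicator (fun _ => (1 : ℝ)) | m]) x ∂Q := integral_congr_ae (h E hE)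
    _ = ∫ x, r x * (ν[E.indicator (fun _ => (1 : ℝ)) | m]) x ∂ν :=
        integral_withDensity_eq_integral_smul hr _
    _ = ∫ x in E, (ν[fun x => (r x : ℝ) | m]) x ∂ν :=
        (setIntegral_condExp_eq_integral_mul_condExp_indicator hm hr_int hE).symm

end ConditionalExpectation

theorem IsDensity.eq_withDensity_of_ae_eq_mul {X : Type*} [MeasurableSpace X]
    {P Q μ : Measure X} {f g : X → ℝ} (hf : IsDensity P μ f) (hg : IsDensity Q μ g) {r : X → ℝ}
    (hr : Measurable r) (hfg : g =ᵐ[μ] f * r) :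
    Q = P.withDensity fun x => ENNReal.ofReal (r x) := by
  obtain ⟨hf_meas, hf_nonneg, rfl⟩ := hf
  obtain ⟨-, -, rfl⟩ := hg
  rw [← withDensity_mul _ hf_meas.ennreal_ofReal hr.ennreal_ofReal]
  refine withDensity_congr_ae (hfg.mono fun x hx => ?_)
  change ENNReal.ofReal (g x) = ENNReal.ofReal (f x) * ENNReal.ofReal (r x)
  rw [hx, Pi.mul_apply, ENNReal.ofReal_mul (hf_nonneg x)]

section SufficientStatistics

variable {X : Type*} [MeasurableSpace X] {Θ : Type*} {P : Θ → Measure X}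
  {T' : Type*} [MeasurableSpace T'] {T : X → T'}

theorem isSufficientStat_of_withDensity_comp [∀ θ, IsFiniteMeasure (P θ)] {ν : Measure X}
    [IsFiniteMeasure ν] (hT : Measurable T) {q : Θ → T' → ℝ≥0} (hq : ∀ θ, Measurable (q θ))
    (hP : ∀ θ, P θ = ν.withDensity fun x => q θ (T x)) : IsSufficientStat P T := by
  refine ⟨hT, fun E hE => ?_⟩
  have hE_int (ρ : Measure X) [IsFiniteMeasure ρ] : Integrable (E.indicator fun _ => (1 : ℝ)) ρ :=
    (integrable_const 1).indicator hE
  obtain ⟨κ, hκ, hκT⟩ := (stronglyMeasurable_condExp (μ := ν) (f := E.indicator fun _ => (1 : ℝ))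
    (m := .comap T inferInstance)).measurable.exists_eq_measurable_comp
  refine ⟨κ, hκ, fun θ => ?_⟩
  have hPθ := hE_int (P θ)
  rw [← hκT]
  rw [hP θ] at hPθ ⊢
  exact condExp_withDensity_of_measurable hT.comap_le ((hq θ).comp (comap_measurable T))
    (hE_int ν) hPθ

theorem IsSufficientStat.exists_measurable_comp_ae_eq_of_withDensity (hT : IsSufficientStat P T)
    {θ₀ θ : Θ} [IsFiniteMeasure (P θ₀)] [hθ : IsFiniteMeasure (P θ)] {r : X → ℝ≥0}
    (hr : Measurable r) (hP : P θ = (P θ₀).withDensity fun x => r x) :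
    ∃ G : T' → ℝ, Measurable G ∧ (fun x => (r x : ℝ)) =ᵐ[P θ₀] G ∘ T := by
  obtain ⟨G, hG, hGT⟩ := (stronglyMeasurable_condExp (μ := P θ₀) (f := fun x => (r x : ℝ))
    (m := .comap T inferInstance)).measurable.exists_eq_measurable_comp
  refine ⟨G, hG, ?_⟩
  rw [hP] at hθ
  rw [← hGT]
  refine ae_eq_condExp_of_condExp_indicator_withDensity_ae_eq hT.1.comap_le hr fun E hE => ?_
  obtain ⟨κ, -, hκ⟩ := hT.2 E hE
  rw [← hP]
  exact (hκ θ).trans ((hP ▸ withDensity_absolutelyContinuous _ _ : P θ ≪ P θ₀).ae_eq (hκ θ₀)).symm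

theorem isMinimalSufficientStat_of_leftInverse_withDensity_comp [∀ θ, IsFiniteMeasure (P θ)]
    (hT : Measurable T) {θ₀ : Θ} {q : Θ → T' → ℝ≥0} (hq : ∀ θ, Measurable (q θ))
    (hP : ∀ θ, P θ = (P θ₀).withDensity fun x => q θ (T x))
    {ι : Type*} [Countable ι] (θs : ι → Θ) {R : (ι → ℝ) → T'} (hR : Measurable R)
    (hRq : ∀ t, R (fun i => q (θs i) t) = t) : IsMinimalSufficientStat P T := by
  refine ⟨isSufficientStat_of_withDensity_comp hT hq hP, fun S' _ S hS => ?_⟩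
  choose G hG hGS using fun i =>
    hS.exists_measurable_comp_ae_eq_of_withDensity ((hq (θs i)).comp hT) (hP (θs i))
  refine ⟨fun s => R fun i => G i s, hR.comp (measurable_pi_lambda _ hG), fun θ => ?_⟩
  have hac : P θ ≪ P θ₀ := hP θ ▸ withDensity_absolutelyContinuous _ _
  filter_upwards [hac.ae_le (ae_all_iff.2 hGS)] with x hx
  calc T x = R fun i => q (θs i) (T x) := (hRq (T x)).symm
    _ = R fun i => G i (S x) := congrArg R (funext hx)

end SufficientStatistics

theorem exists_finset_linearMap_leftInverse {K V W Θ : Type*} [DivisionRing K] [AddCommGroup V]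
    [Module K V] [FiniteDimensional K V] [AddCommGroup W] [Module K W] (L : Θ → V →ₗ[K] W)
    (hL : ∀ v, (∀ θ, L θ v = 0) → v = 0) :
    ∃ (J : Finset Θ) (A : (J → W) →ₗ[K] V), ∀ v, A (fun θ => L θ v) = v := by
  obtain ⟨J, hJ⟩ := Finset.exists_inf_le fun θ => LinearMap.ker (L θ)
  have hker : LinearMap.ker (LinearMap.pi fun θ : J => L θ) = ⊥ := by
    refine (Submodule.eq_bot_iff _).2 fun v hv => hL v fun θ => hJ θ ?_
    simpa [LinearMap.ker_pi, Finset.inf_eq_iInf] using hv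
  obtain ⟨A, hA⟩ := (LinearMap.pi fun θ : J => L θ).exists_leftInverse_of_injective hker
  exact ⟨J, A, LinearMap.congr_fun hA⟩

section ExponentialFamilies

variable {X : Type*} [MeasurableSpace X] {Θ : Type*} {P : Θ → Measure X}
  [∀ θ, IsFiniteMeasure (P θ)]
  {V : Type*} [AddCommGroup V] [Module ℝ V] [FiniteDimensional ℝ V] [TopologicalSpace V]
  [IsTopologicalAddGroup V] [ContinuousSMul ℝ V] [T2Space V] [MeasurableSpace V] [BorelSpace V]
  {T : X → V}

theorem isMinimalSufficientStat_of_withDensity_exp (hT : Measurable T) {θ₀ : Θ}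
    {ζ : Θ → Module.Dual ℝ V} {c : Θ → ℝ}
    (hP : ∀ θ, P θ = (P θ₀).withDensity fun x => ENNReal.ofReal (Real.exp (ζ θ (T x) - c θ)))
    (hζ : ∀ v, (∀ θ, ζ θ v = 0) → v = 0) : IsMinimalSufficientStat P T := by
  obtain ⟨J, A, hA⟩ := exists_finset_linearMap_leftInverse ζ hζ
  have hζ_meas θ : Measurable (ζ θ) := (ζ θ).continuous_of_finiteDimensional.measurable
  have hA_meas : Measurable A := A.continuous_of_finiteDimensional.measurable
  refine isMinimalSufficientStat_of_leftInverse_withDensity_comp hT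
    (q := fun θ v => (Real.exp (ζ θ v - c θ)).toNNReal) (by fun_prop) hP
    (fun θ : J => θ) (R := fun y => A fun θ => Real.log (y θ) + c θ) (by fun_prop) fun v => ?_
  simpa [Real.coe_toNNReal _ (Real.exp_nonneg _)] using hA v

theorem method_3_3_general [Nonempty Θ] {μ : Measure X} {f : Θ → X → ℝ}
    (hf : ∀ θ, IsDensity (P θ) μ (f θ)) {η : Θ → Module.Dual ℝ V} {B : Θ → ℝ}
    (hT : Measurable T) {h : X → ℝ}
    (hform : ∀ θ, ∀ᵐ x ∂μ, f θ x = Real.exp (η θ (T x) - B θ) * h x)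
    (hindep : ∀ (a₀ : ℝ) (v : V), (∀ θ, η θ v = a₀) → v = 0) :
    IsMinimalSufficientStat P T := by
  obtain ⟨θ₀⟩ := ‹Nonempty Θ›
  have hη_meas θ : Measurable (η θ) := (η θ).continuous_of_finiteDimensional.measurable
  refine isMinimalSufficientStat_of_withDensity_exp hT (θ₀ := θ₀) (ζ := fun θ => η θ - η θ₀)
    (c := fun θ => B θ - B θ₀) (fun θ => ?_)
    fun v hv => hindep (η θ₀ v) v fun θ => sub_eq_zero.1 (hv θ)
  refine (hf θ₀).eq_withDensity_of_ae_eq_mul (hf θ)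
    (by simp only [LinearMap.sub_apply]; fun_prop) ?_
  filter_upwards [hform θ, hform θ₀] with x hx hx₀
  rw [Pi.mul_apply, hx, hx₀, mul_right_comm, ← Real.exp_add, LinearMap.sub_apply]
  ring_nf

end ExponentialFamilies

/-- Method 3.3 (exponential families). -/
theorem method_3_3
    {X : Type u} [mX : MeasurableSpace X] {Θ : Type v} [Nonempty Θ]
    (P : Θ → Measure X) (hP : ∀ θ, IsProbabilityMeasure (P θ))
    (μ : Measure X) (hμ : SigmaFinite μ) (hac : ∀ θ, P θ ≪ μ)
    (hX : IsAnalyticBorel X)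
    (f : Θ → X → ℝ) (hf : ∀ θ, IsDensity (P θ) μ (f θ))
    (k : ℕ) (η : Fin k → Θ → ℝ) (B : Θ → ℝ)
    (Ts : Fin k → X → ℝ) (hTs : ∀ i, Measurable (Ts i))
    (h : X → ℝ) (hh : Measurable h)
    (hform : ∀ θ : Θ, ∀ᵐ x ∂μ,
      f θ x = Real.exp ((∑ i, η i θ * Ts i x) - B θ) * h x)
    (hindep : ∀ (a₀ : ℝ) (a : Fin k → ℝ),
      (∀ θ : Θ, (∑ i, a i * η i θ) = a₀) → a₀ = 0 ∧ ∀ i, a i = 0) :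
    IsMinimalSufficientStat P (fun x => (fun i => Ts i x : Fin k → ℝ)) := by
  exact method_3_3_general hf (η := fun θ => dotProductBilin ℝ ℝ fun i => η i θ)
    (measurable_pi_lambda _ hTs) hform
    fun a₀ a ha => funext (hindep a₀ a fun θ => (dotProduct_comm _ _).trans (ha θ)).2
end
end

section
/- Proposition 4.5. Let ℰ = (𝒳, Σ, {P_θ}_{θ∈Θ}) be a statistical model and T : 𝒳 → (𝒯,Σ_𝒯) a measurable function with (𝒯,Σ_𝒯) a standard Borel space. If the sub-σ-algebra σ(T) = T⁻¹(Σ_𝒯) is a minimal sufficient σ-algebra, then T is a minimal sufficient statistic. -/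
/-!
Being equal `P θ`-almost everywhere for every `θ` is equality along the σ-filter `⨆ θ, ae (P θ)`,
so minimality of `σ(T)` makes `T` measurable with respect to `σ(S)` modulo this filter, for each
sufficient statistic `S`. A standard Borel space embeds in `ℕ → Bool` as a measurable set, so
correcting `T` on one countable family of preimages gives a `σ(S)`-measurable map into `ℕ → Bool`,
and a measurable retraction turns it into a `σ(S)`-measurable map equal to `T` modulo the filter.
By Doob–Dynkin, that map factors through `S`.
-/

open MeasureTheory

noncomputable section

universe u v w u'

section EventuallyMeasurable

open Filter

variable {α ι β : Type*} {m : MeasurableSpace α} {l : Filter α} [CountableInterFilter l]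

theorem exists_measurable_eventuallyEq_of_eventuallyMeasurable_bool {f : α → Bool}
    (hf : EventuallyMeasurable m l f) : ∃ g : α → Bool, Measurable g ∧ f =ᶠ[l] g := by
  classical
  obtain ⟨B, hB, hfB⟩ := hf (measurableSet_singleton true)
  refine ⟨fun x ↦ decide (x ∈ B), measurable_to_bool (by simpa [Set.preimage] using hB), ?_⟩
  filter_upwards [hfB.mem_iff] with x hx
  rw [Bool.eq_iff_iff, decide_eq_true_iff]
  exact hx

theorem exists_measurable_eventuallyEq_pi [Countable ι] {Y : ι → Type*}
    [∀ i, MeasurableSpace (Y i)] {f : α → ∀ i, Y i}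
    (hf : ∀ i, ∃ g : α → Y i, Measurable g ∧ (f · i) =ᶠ[l] g) :
    ∃ g : α → ∀ i, Y i, Measurable g ∧ f =ᶠ[l] g := by
  choose g hg hfg using hf
  refine ⟨fun x i ↦ g i x, measurable_pi_lambda _ hg, ?_⟩
  filter_upwards [eventually_countable_forall.2 hfg] with x hx using funext hx

theorem exists_measurable_leftInverse_nat_bool (β : Type*) [MeasurableSpace β]
    [StandardBorelSpace β] [Nonempty β] :
    ∃ (e : β → ℕ → Bool) (r : (ℕ → Bool) → β),
      Measurable e ∧ Measurable r ∧ Function.LeftInverse r e := by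
  obtain ⟨e, he, he_inj⟩ := MeasurableSpace.measurable_injection_nat_bool_of_countablySeparated β
  obtain ⟨r, hr, hre⟩ :=
    (he.measurableEmbedding he_inj).exists_measurable_extend measurable_id fun _ ↦ ‹_›
  exact ⟨e, r, he, hr, congrFun hre⟩

theorem exists_measurable_eventuallyEq_of_eventuallyMeasurable [MeasurableSpace β]
    [StandardBorelSpace β] {f : α → β} (hf : EventuallyMeasurable m l f) :
    ∃ g : α → β, Measurable g ∧ f =ᶠ[l] g := by
  rcases isEmpty_or_nonempty β with _ | _
  · exact ⟨f, measurable_of_subsingleton_codomain f, .rfl⟩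
  obtain ⟨e, r, he, hr, hre⟩ := exists_measurable_leftInverse_nat_bool β
  obtain ⟨g, hg, hfg⟩ : ∃ g : α → ℕ → Bool, Measurable g ∧ e ∘ f =ᶠ[l] g :=
    exists_measurable_eventuallyEq_pi fun n ↦
      exists_measurable_eventuallyEq_of_eventuallyMeasurable_bool <|
        ((measurable_pi_apply n).comp he).comp_eventuallyMeasurable hf
  refine ⟨r ∘ g, hr.comp hg, ?_⟩
  filter_upwards [hfg] with x hx
  rw [Function.comp_apply, ← hx, Function.comp_apply, hre]

end EventuallyMeasurable

section StatisticalModel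

open Filter

variable {X Θ Y : Type*} {m : MeasurableSpace X} [MeasurableSpace X] {P : Θ → Measure X}

/-- The filter of sets whose complement is null under every `P θ`: a property holds eventually
along it iff it holds `P θ`-almost everywhere for every `θ`. -/
def modelAE (P : Θ → Measure X) : Filter X :=
  ⨆ θ, ae (P θ)

theorem eventually_modelAE_iff {p : X → Prop} :
    (∀ᶠ x in modelAE P, p x) ↔ ∀ θ, ∀ᵐ x ∂P θ, p x :=
  eventually_iSup

instance : CountableInterFilter (modelAE P) where
  countable_sInter_mem _ hS h := mem_iSup.2 fun θ ↦
    (countable_sInter_mem hS).2 fun s hs ↦ mem_iSup.1 (h s hs) θ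

theorem completionAlg_le_eventuallyMeasurableSpace :
    completionAlg P m ≤ eventuallyMeasurableSpace m (modelAE P) := by
  refine MeasurableSpace.generateFrom_le ?_
  rintro A (hA | hA)
  · exact le_eventuallyMeasurableSpace A hA
  · refine ⟨∅, m.measurableSet_empty, eventuallyEq_empty.2 <| eventually_modelAE_iff.2 fun θ ↦ ?_⟩
    exact measure_eq_zero_iff_ae_notMem.1 (hA.2 θ)

theorem isSufficientStat_iff_isSufficientSubalgebra_comap [mY : MeasurableSpace Y] {T : X → Y} :
    IsSufficientStat P T ↔ IsSufficientSubalgebra P (mY.comap T) := by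
  refine and_congr measurable_iff_comap_le (forall₂_congr fun E _ ↦ ⟨?_, ?_⟩)
  · rintro ⟨k, hk, hkE⟩
    exact ⟨k ∘ T, hk.comp (comap_measurable T), hkE⟩
  · rintro ⟨κ, hκ, hκE⟩
    obtain ⟨k, hk, rfl⟩ := hκ.exists_eq_measurable_comp
    exact ⟨k, hk, hκE⟩

theorem exists_measurable_comp_ae_eq_of_comap_le_completionAlg {Z : Type*}
    [mY : MeasurableSpace Y] [StandardBorelSpace Y] [Nonempty Y] [mZ : MeasurableSpace Z]
    {T : X → Y} {S : X → Z} (hTS : mY.comap T ≤ completionAlg P (mZ.comap S)) :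
    ∃ g : Z → Y, Measurable g ∧ ∀ θ, T =ᵐ[P θ] g ∘ S := by
  have hT : EventuallyMeasurable (mZ.comap S) (modelAE P) T :=
    measurable_iff_comap_le.2 (hTS.trans completionAlg_le_eventuallyMeasurableSpace)
  obtain ⟨T', hT', hTT'⟩ := exists_measurable_eventuallyEq_of_eventuallyMeasurable hT
  obtain ⟨g, hg, rfl⟩ := hT'.exists_eq_measurable_comp
  exact ⟨g, hg, eventually_modelAE_iff.1 hTT'⟩

end StatisticalModel

/-- Proposition 4.5. -/
theorem prop_4_5
    {X : Type u} [mX : MeasurableSpace X] {Θ : Type v} [Nonempty Θ]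
    (P : Θ → Measure X) (hP : ∀ θ, IsProbabilityMeasure (P θ))
    {T' : Type w} [mT : MeasurableSpace T'] [StandardBorelSpace T']
    (T : X → T') (hT : Measurable T)
    (hmin : IsMinimalSufficientSubalgebra P (MeasurableSpace.comap T mT)) :
    IsMinimalSufficientStat P T := by
  obtain ⟨hsuff, hleast⟩ := hmin
  refine ⟨isSufficientStat_iff_isSufficientSubalgebra_comap.2 hsuff, fun S' mS S hS ↦ ?_⟩
  have : Nonempty T' :=
    (nonempty_of_isProbabilityMeasure (P (Classical.arbitrary Θ))).map T
  exact exists_measurable_comp_ae_eq_of_comap_le_completionAlg <|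
    hleast _ (isSufficientStat_iff_isSufficientSubalgebra_comap.1 hS)
end
end

section
/- Proposition 4.7(i). Let ℰ = (𝒳, Σ, {P_θ}_{θ∈Θ}) be a statistical model and (c_n)_{n∈ℕ} a sequence of strictly positive reals with Σ_{n∈ℕ} c_n = 1. If {θ_n}_{n∈ℕ} ⊆ Θ is dense in Θ with respect to the topology τ⟨ℰ⟩, then P : Σ → ℝ given by P := Σ_{n∈ℕ} c_n·P_{θ_n} is a probability measure satisfying ℰ ≡ P (i.e., for every E ∈ Σ, P(E) = 0 if and only if P_θ(E) = 0 for every θ ∈ Θ). -/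
open MeasureTheory

noncomputable section

universe u v w u'

/-!
For measurable `s` the function `θ ↦ P θ s` is `τ⟨ℰ⟩`-continuous, so the parameters at which `s` is
null form a closed set. Positivity of the weights means that a null set of the mixture is null at
every `θ_n`, hence on the closure of `{θ_n}`, which is all of `Θ`.
-/

section

open scoped ENNReal Topology

variable {X : Type u} [MeasurableSpace X] {Θ : Type v} {P : Θ → Measure X} {ι : Type*}

theorem continuous_modelTopology_toReal {s : Set X} (hs : MeasurableSet s) :
    Continuous[modelTopology P, inferInstance] fun θ => (P θ s).toReal :=
  continuous_iInf_dom (i := (⟨s, hs⟩ : {E : Set X // MeasurableSet E})) continuous_induced_dom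

theorem isClosed_modelTopology_setOf_measure_eq_zero [∀ θ, IsFiniteMeasure (P θ)] {s : Set X}
    (hs : MeasurableSet s) : IsClosed[modelTopology P] {θ | P θ s = 0} := by
  have h_preimage : {θ | P θ s = 0} = (fun θ => (P θ s).toReal) ⁻¹' {0} := by
    ext θ
    simp only [Set.mem_ofPred_eq, Set.mem_preimage, Set.mem_singleton_iff,
      ENNReal.toReal_eq_zero_iff, measure_ne_top, or_false]
  let := modelTopology P
  rw [h_preimage]
  exact isClosed_singleton.preimage (continuous_modelTopology_toReal hs)

theorem measure_eq_zero_of_dense_modelTopology [∀ θ, IsFiniteMeasure (P θ)] {D : Set Θ}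
    (hD : @Dense Θ (modelTopology P) D) {s : Set X} (hs : MeasurableSet s)
    (hnull : ∀ θ ∈ D, P θ s = 0) (θ : Θ) : P θ s = 0 :=
  letI := modelTopology P
  closure_minimal hnull (isClosed_modelTopology_setOf_measure_eq_zero hs) (hD θ)

theorem absolutelyContinuous_sum_smul {w : ι → ℝ≥0∞} (μ : ι → Measure X) {i : ι} (hw : w i ≠ 0) :
    μ i ≪ Measure.sum fun i => w i • μ i :=
  Measure.absolutelyContinuous_sum_right i (Measure.absolutelyContinuous_smul hw)

theorem absolutelyContinuous_sum_smul_of_dense [∀ θ, IsFiniteMeasure (P θ)] {w : ι → ℝ≥0∞}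
    (hw : ∀ i, w i ≠ 0) {t : ι → Θ} (ht : @Dense Θ (modelTopology P) (Set.range t)) (θ : Θ) :
    P θ ≪ Measure.sum fun i => w i • P (t i) :=
  Measure.AbsolutelyContinuous.mk fun _ hs hnull =>
    measure_eq_zero_of_dense_modelTopology ht hs
      (Set.forall_mem_range.mpr fun i =>
        absolutelyContinuous_sum_smul (fun i => P (t i)) (hw i) hnull) θ

theorem sum_smul_apply_eq_zero_iff_of_dense [Countable ι] [∀ θ, IsFiniteMeasure (P θ)]
    {w : ι → ℝ≥0∞} (hw : ∀ i, w i ≠ 0) {t : ι → Θ}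
    (ht : @Dense Θ (modelTopology P) (Set.range t)) (s : Set X) :
    (Measure.sum fun i => w i • P (t i)) s = 0 ↔ ∀ θ, P θ s = 0 where
  mp hnull θ := absolutelyContinuous_sum_smul_of_dense hw ht θ hnull
  mpr hnull := Measure.sum_apply_eq_zero.mpr fun i =>
    Measure.smul_absolutelyContinuous (hnull (t i))

theorem isProbabilityMeasure_sum_smul {w : ι → ℝ≥0∞} (hw : ∑' i, w i = 1) (μ : ι → Measure X)
    [∀ i, IsProbabilityMeasure (μ i)] : IsProbabilityMeasure (Measure.sum fun i => w i • μ i) where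
  measure_univ := by
    simp only [Measure.sum_apply _ MeasurableSet.univ, Measure.smul_apply, measure_univ,
      smul_eq_mul, mul_one, hw]

theorem countable_of_tsum_ne_top {w : ι → ℝ≥0∞} (hw : ∀ i, w i ≠ 0) (hsum : ∑' i, w i ≠ ∞) :
    Countable ι := by
  rw [← Set.countable_univ_iff, ← Function.support_eq_univ hw]
  exact Summable.countable_support_ennreal hsum

theorem tsum_ofReal_eq_ofReal_tsum {c : ι → ℝ} (hc : ∀ i, 0 ≤ c i) (hsum : ∑' i, c i ≠ 0) :
    ∑' i, ENNReal.ofReal (c i) = ENNReal.ofReal (∑' i, c i) :=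
  -- A divergent real `tsum` is `0` by convention, so `hsum` entails summability.
  have hsummable : Summable c := not_imp_comm.mp tsum_eq_zero_of_not_summable hsum
  (ENNReal.ofReal_tsum_of_nonneg hc hsummable).symm

theorem prop_4_7_i_general [∀ θ, IsProbabilityMeasure (P θ)] {w : ι → ℝ≥0∞}
    (hw : ∀ i, w i ≠ 0) (hsum : ∑' i, w i = 1) {t : ι → Θ}
    (ht : @Dense Θ (modelTopology P) (Set.range t)) :
    IsProbabilityMeasure (Measure.sum fun i => w i • P (t i)) ∧
    ∀ s : Set X, (Measure.sum fun i => w i • P (t i)) s = 0 ↔ ∀ θ, P θ s = 0 :=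
  have : Countable ι := countable_of_tsum_ne_top hw (hsum ▸ ENNReal.one_ne_top)
  ⟨isProbabilityMeasure_sum_smul hsum fun i => P (t i), sum_smul_apply_eq_zero_iff_of_dense hw ht⟩

end

/-- Proposition 4.7(i). -/
theorem prop_4_7_i
    {X : Type u} [mX : MeasurableSpace X] {Θ : Type v} [Nonempty Θ]
    (P : Θ → Measure X) (hP : ∀ θ, IsProbabilityMeasure (P θ))
    (c : ℕ → ℝ) (hc : ∀ n, 0 < c n) (hsum : (∑' n, c n) = 1)
    (θseq : ℕ → Θ) (hdense : @Dense Θ (modelTopology P) (Set.range θseq)) :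
    IsProbabilityMeasure (Measure.sum fun n => ENNReal.ofReal (c n) • P (θseq n)) ∧
    ∀ s : Set X, MeasurableSet s →
      ((Measure.sum fun n => ENNReal.ofReal (c n) • P (θseq n)) s = 0 ↔
        ∀ θ : Θ, P θ s = 0) := by
  have hweights : ∑' n, ENNReal.ofReal (c n) = 1 := by
    rw [tsum_ofReal_eq_ofReal_tsum (fun n => (hc n).le) (hsum ▸ one_ne_zero), hsum,
      ENNReal.ofReal_one]
  have hw : ∀ n, ENNReal.ofReal (c n) ≠ 0 := fun n => (ENNReal.ofReal_pos.mpr (hc n)).ne'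
  exact (prop_4_7_i_general hw hweights hdense).imp_right fun hnull s _ => hnull s
end
end

section
/- Proposition 4.7(ii). Let ℰ = (𝒳, Σ, {P_θ}_{θ∈Θ}) be a statistical model, (c_n)_{n∈ℕ} a sequence of strictly positive reals with Σ_{n∈ℕ} c_n = 1, and {θ_n}_{n∈ℕ} ⊆ Θ dense in Θ with respect to τ⟨ℰ⟩; let P := Σ_{n∈ℕ} c_n·P_{θ_n}. For each n ∈ ℕ choose a density f_{θ_n} of P_{θ_n} with respect to P. Then 𝔄 := ⋁_{n∈ℕ} σ(f_{θ_n}), the σ-algebra generated by the union of the σ-algebras generated by the functions f_{θ_n}, is a countably generated minimal sufficient sub-σ-algebra of Σ. -/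
open MeasureTheory

noncomputable section

universe u v w u'

/-!
If the density `f` of `Q` with respect to `μ` is measurable for `m`, it can be pulled out of
`μ[· | m]`, so `Q[g | m] = μ[g | m]` holds `Q`-a.e. Hence, for `𝔄` and every event `E`, one version
`κ` of `P[1_E | 𝔄]` with values in `[0, 1]` serves all `P_{θ_n}`. Integrals of bounded measurable
functions, being uniform limits of integrals of simple functions, are `τ⟨ℰ⟩`-continuous in `θ`, so
the equations `∫_A κ dP_θ = P_θ(A ∩ E)`, `A ∈ 𝔄`, extend from the dense set `{θ_n}` to all `θ`.

For minimality let `𝔅` be sufficient. The common version of the `P_θ(E | 𝔅)` is also a version of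
`P(E | 𝔅)`, and conditional expectation is self-adjoint, so
`∫_E f_{θ_n} dP = P_{θ_n}(E) = ∫ P(E | 𝔅) f_{θ_n} dP = ∫_E P[f_{θ_n} | 𝔅] dP` for every event `E`.
Thus `f_{θ_n}` agrees `P`-a.e. with a `𝔅`-measurable function, and by density a `P`-null set is
null for every `P_θ`.
-/

section ConditionalExpectation

variable {X F ι : Type*} {m mX : MeasurableSpace X} {μ : Measure X}
  [NormedAddCommGroup F] [NormedSpace ℝ F] [CompleteSpace F]

theorem integral_mul_condExp (hm : m ≤ mX) [SigmaFinite (μ.trim hm)] {f g : X → ℝ}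
    (hf : Integrable f μ) (hg : Integrable g μ) (hfg : Integrable (f * μ[g | m]) μ)
    (hfg' : Integrable (μ[f | m] * g) μ) :
    ∫ x, f x * μ[g | m] x ∂μ = ∫ x, μ[f | m] x * g x ∂μ := calc
  ∫ x, f x * μ[g | m] x ∂μ = ∫ x, μ[f * μ[g | m] | m] x ∂μ := (integral_condExp hm).symm
  _ = ∫ x, μ[f | m] x * μ[g | m] x ∂μ :=
    integral_congr_ae (condExp_mul_of_stronglyMeasurable_right stronglyMeasurable_condExp hfg hf)
  _ = ∫ x, μ[μ[f | m] * g | m] x ∂μ :=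
    (integral_congr_ae
      (condExp_mul_of_stronglyMeasurable_left stronglyMeasurable_condExp hfg' hg)).symm
  _ = ∫ x, μ[f | m] x * g x ∂μ := integral_condExp hm

theorem exists_measurable_forall_mem_Icc_condExp_ae_eq (hm : m ≤ mX) [SigmaFinite (μ.trim hm)]
    {a b : ℝ} (hab : a ≤ b) {f : X → ℝ} (hf : Integrable f μ) (hfab : ∀ᵐ x ∂μ, f x ∈ Set.Icc a b) :
    ∃ κ : X → ℝ, Measurable[m] κ ∧ (∀ x, κ x ∈ Set.Icc a b) ∧ μ[f | m] =ᵐ[μ] κ := by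
  refine ⟨fun x => Set.projIcc a b hab (μ[f | m] x), ?_, fun x => Subtype.coe_prop _, ?_⟩
  · exact (continuous_subtype_val.comp continuous_projIcc).measurable.comp
      stronglyMeasurable_condExp.measurable
  · filter_upwards [(convex_Icc a b).condExp_mem hm hf isClosed_Icc hfab] with x hx
    rw [Set.projIcc_of_mem hab hx]

theorem condExp_sum_measure_ae_eq [Countable ι] (hm : m ≤ mX) {μ : ι → Measure X}
    [SigmaFinite ((Measure.sum μ).trim hm)] {f κ : X → F} (hf : Integrable f (Measure.sum μ))
    (hκ : StronglyMeasurable[m] κ) (h : ∀ i, (μ i)[f | m] =ᵐ[μ i] κ) :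
    (Measure.sum μ)[f | m] =ᵐ[Measure.sum μ] κ := by
  have hfi (i : ι) : Integrable f (μ i) := hf.mono_measure (Measure.le_sum μ i)
  have hσ (i : ι) : SigmaFinite ((μ i).trim hm) :=
    Measure.sigmaFinite_of_le ((Measure.sum μ).trim hm) <| Measure.le_iff.2 fun s hs => by
      simpa only [trim_measurableSet_eq hm hs] using Measure.le_sum μ i s
  have hκ_int : Integrable κ (Measure.sum μ) := by
    refine integrable_sum_measure (fun i => integrable_condExp.congr (h i)) ?_
    refine hf.summable_integral.of_nonneg_of_le (fun i => by positivity) fun i => ?_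
    calc ∫ x, ‖κ x‖ ∂μ i = ∫ x, ‖(μ i)[f | m] x‖ ∂μ i :=
          integral_congr_ae ((h i).symm.fun_comp norm)
      _ ≤ ∫ x, ‖f x‖ ∂μ i := integral_norm_condExp_le f
  refine (ae_eq_condExp_of_forall_setIntegral_eq hm hf (fun s _ _ => hκ_int.integrableOn)
    (fun s hs _ => ?_) hκ.aestronglyMeasurable).symm
  have hsum {g : X → F} (hg : Integrable g (Measure.sum μ)) :
      ∫ x in s, g x ∂Measure.sum μ = ∑' i, ∫ x in s, g x ∂μ i := by
    rw [Measure.restrict_sum _ (hm s hs)]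
    exact integral_sum_measure (by rw [← Measure.restrict_sum _ (hm s hs)]; exact hg.restrict)
  rw [hsum hκ_int, hsum hf]
  refine tsum_congr fun i => ?_
  rw [← setIntegral_condExp hm (hfi i) hs]
  exact (integral_congr_ae (ae_restrict_of_ae (h i))).symm

end ConditionalExpectation

namespace IsDensity

variable {X F : Type*} {m mX : MeasurableSpace X} {Q μ : Measure X} {f : X → ℝ}
  [NormedAddCommGroup F] [NormedSpace ℝ F]

theorem absolutelyContinuous (hf : IsDensity Q μ f) : Q ≪ μ := by
  rw [hf.2.2]
  exact withDensity_absolutelyContinuous _ _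

theorem integrable_iff (hf : IsDensity Q μ f) {g : X → F} :
    Integrable g Q ↔ Integrable (f • g) μ := by
  rw [hf.2.2, integrable_withDensity_iff_integrable_smul' hf.1.ennreal_ofReal
    (Filter.Eventually.of_forall fun _ => ENNReal.ofReal_lt_top)]
  simp only [ENNReal.toReal_ofReal (hf.2.1 _)]
  rfl

theorem setIntegral_eq (hf : IsDensity Q μ f) (g : X → F) {s : Set X} (hs : MeasurableSet s) :
    ∫ x in s, g x ∂Q = ∫ x in s, f x • g x ∂μ := by
  rw [hf.2.2, setIntegral_withDensity_eq_setIntegral_toReal_smul hf.1.ennreal_ofReal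
    (Filter.Eventually.of_forall fun _ => ENNReal.ofReal_lt_top) g hs]
  simp only [ENNReal.toReal_ofReal (hf.2.1 _)]

theorem integrable [IsFiniteMeasure Q] (hf : IsDensity Q μ f) : Integrable f μ :=
  (hf.integrable_iff.1 (integrable_const (1 : ℝ))).congr (.of_forall fun x => mul_one (f x))

theorem sigmaFinite_trim (hf : IsDensity Q μ f) (hm : m ≤ mX) [SigmaFinite (μ.trim hm)]
    (hfm : Measurable[m] f) : SigmaFinite (Q.trim hm) := by
  rw [hf.2.2, trim_withDensity hm hfm.ennreal_ofReal]
  infer_instance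

theorem condExp_ae_eq [CompleteSpace F] (hf : IsDensity Q μ f) (hm : m ≤ mX)
    [SigmaFinite (μ.trim hm)] (hfm : Measurable[m] f) {g : X → F} (hgQ : Integrable g Q)
    (hgμ : Integrable g μ) : Q[g | m] =ᵐ[Q] μ[g | m] := by
  have := hf.sigmaFinite_trim hm hfm
  have hfg : Integrable (f • g) μ := hf.integrable_iff.1 hgQ
  have hpull : μ[f • g | m] =ᵐ[μ] f • μ[g | m] :=
    condExp_smul_of_aestronglyMeasurable_left hfm.stronglyMeasurable.aestronglyMeasurable hfg hgμ
  have hint : Integrable (μ[g | m]) Q := hf.integrable_iff.2 (integrable_condExp.congr hpull)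
  refine (ae_eq_condExp_of_forall_setIntegral_eq hm hgQ (fun s _ _ => hint.integrableOn)
    (fun s hs _ => ?_) stronglyMeasurable_condExp.aestronglyMeasurable).symm
  calc ∫ x in s, μ[g | m] x ∂Q = ∫ x in s, f x • μ[g | m] x ∂μ := hf.setIntegral_eq _ (hm s hs)
    _ = ∫ x in s, μ[f • g | m] x ∂μ := integral_congr_ae (ae_restrict_of_ae hpull.symm)
    _ = ∫ x in s, f x • g x ∂μ := setIntegral_condExp hm hfg hs
    _ = ∫ x in s, g x ∂Q := (hf.setIntegral_eq g (hm s hs)).symm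

theorem ae_eq_condExp_of_condExp_indicator_ae_eq [IsFiniteMeasure μ] [IsFiniteMeasure Q]
    (hf : IsDensity Q μ f) (hm : m ≤ mX)
    (h : ∀ E, MeasurableSet[mX] E →
      Q[E.indicator (fun _ => (1 : ℝ)) | m] =ᵐ[Q] μ[E.indicator (fun _ => (1 : ℝ)) | m]) :
    f =ᵐ[μ] μ[f | m] := by
  refine Integrable.ae_eq_of_forall_setIntegral_eq _ _ hf.integrable integrable_condExp
    fun E hE _ => ?_
  set e : X → ℝ := E.indicator fun _ => 1
  have mul_e (g : X → ℝ) : (fun x => g x * e x) = E.indicator g := by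
    ext x
    by_cases hx : x ∈ E <;> simp [e, hx]
  have he (ν : Measure X) [IsFiniteMeasure ν] : Integrable e ν := (integrable_const 1).indicator hE
  have hcondE : Integrable (f * μ[e | m]) μ :=
    hf.integrable_iff.1 (integrable_condExp.congr (h E hE))
  have hcondf : Integrable (μ[f | m] * e) μ := by
    rw [Pi.mul_def, mul_e]
    exact integrable_condExp.indicator hE
  calc ∫ x in E, f x ∂μ = ∫ x, f x * e x ∂μ := by rw [mul_e, integral_indicator hE]
    _ = ∫ x, e x ∂Q := by simpa using (hf.setIntegral_eq e .univ).symm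
    _ = ∫ x, Q[e | m] x ∂Q := (integral_condExp hm).symm
    _ = ∫ x, μ[e | m] x ∂Q := integral_congr_ae (h E hE)
    _ = ∫ x, f x * μ[e | m] x ∂μ := by simpa using hf.setIntegral_eq μ[e | m] .univ
    _ = ∫ x, μ[f | m] x * e x ∂μ := integral_mul_condExp hm hf.integrable (he μ) hcondE hcondf
    _ = ∫ x in E, μ[f | m] x ∂μ := by rw [mul_e, integral_indicator hE]

end IsDensity

theorem isDensity_nnreal_smul {X : Type*} {mX : MeasurableSpace X} (μ : Measure X) (c : NNReal) :
    IsDensity (c • μ) μ fun _ => (c : ℝ) :=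
  ⟨measurable_const, fun _ => c.2, by rw [withDensity_const, ENNReal.ofReal_coe_nnreal]; rfl⟩

theorem exists_simpleFunc_forall_dist_lt {X F : Type*} [MeasurableSpace X]
    [PseudoMetricSpace F] [TopologicalSpace.SeparableSpace F] [Nonempty F] [MeasurableSpace F]
    [OpensMeasurableSpace F] {f : X → F} (hf : Measurable f) {K : Set F} (hK : IsCompact K)
    (hfK : ∀ x, f x ∈ K) {ε : ℝ} (hε : 0 < ε) :
    ∃ s : SimpleFunc X F, ∀ x, dist (s x) (f x) < ε := by
  let e : ℕ → F := TopologicalSpace.denseSeq F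
  obtain ⟨t, ht⟩ := hK.elim_finite_subcover (fun k => Metric.ball (e k) ε)
    (fun _ => Metric.isOpen_ball) fun y _ => by
      obtain ⟨k, hk⟩ := (TopologicalSpace.denseRange_denseSeq F).exists_dist_lt y hε
      exact Set.mem_iUnion.2 ⟨k, hk⟩
  refine ⟨(SimpleFunc.nearestPt e (t.sup id)).comp f hf, fun x => ?_⟩
  obtain ⟨k, hkt, hk⟩ := Set.mem_iUnion₂.1 (ht (hfK x))
  rw [SimpleFunc.coe_comp, Function.comp_apply, ← edist_lt_ofReal]
  refine (SimpleFunc.edist_nearestPt_le e (f x) (Finset.le_sup (f := id) hkt)).trans_lt ?_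
  rwa [edist_lt_ofReal, dist_comm]

namespace modelTopology

open scoped Topology

variable {X : Type u} {m mX : MeasurableSpace X} {Θ : Type v}

theorem continuous_measureReal (P : Θ → Measure X) {s : Set X} (hs : MeasurableSet s) :
    Continuous[modelTopology P, inferInstance] fun θ => (P θ).real s :=
  continuous_iInf_dom (i := (⟨s, hs⟩ : {E : Set X // MeasurableSet E})) continuous_induced_dom

theorem continuous_integral_simpleFunc {F : Type*} [NormedAddCommGroup F] [NormedSpace ℝ F]
    [CompleteSpace F] (P : Θ → Measure X) [∀ θ, IsFiniteMeasure (P θ)] (s : SimpleFunc X F) :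
    Continuous[modelTopology P, inferInstance] fun θ => ∫ x, s x ∂P θ := by
  let : TopologicalSpace Θ := modelTopology P
  simp_rw [fun θ => s.integral_eq_sum (SimpleFunc.integrable_of_isFiniteMeasure (μ := P θ) s)]
  exact continuous_finsetSum _ fun y _ =>
    (continuous_measureReal P (s.measurableSet_fiber y)).smul continuous_const

theorem continuous_integral_of_norm_le {F : Type*} [NormedAddCommGroup F] [NormedSpace ℝ F]
    [ProperSpace F] [MeasurableSpace F] [BorelSpace F] (P : Θ → Measure X)
    [∀ θ, IsFiniteMeasure (P θ)] {k : X → F} (hk : Measurable k) {C : ℝ} (hkC : ∀ x, ‖k x‖ ≤ C) :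
    Continuous[modelTopology P, inferInstance] fun θ => ∫ x, k x ∂P θ := by
  let : TopologicalSpace Θ := modelTopology P
  refine continuous_of_locally_uniform_approx_of_continuousAt fun θ₀ u hu => ?_
  obtain ⟨ε, hε, hεu⟩ := Metric.mem_uniformity_dist.1 hu
  let M : ℝ := (P θ₀).real Set.univ + 1
  have hM : 0 < M := by positivity
  obtain ⟨s, hs⟩ := exists_simpleFunc_forall_dist_lt hk (isCompact_closedBall 0 C)
    (fun x => mem_closedBall_zero_iff.2 (hkC x)) (div_pos hε hM)
  have hmass : ∀ᶠ θ in 𝓝 θ₀, (P θ).real Set.univ < M :=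
    (continuous_measureReal P .univ).continuousAt.eventually_lt_const (lt_add_one _)
  refine ⟨_, hmass, fun θ => ∫ x, s x ∂P θ, (continuous_integral_simpleFunc P s).continuousAt,
    fun θ hθ => hεu ?_⟩
  have hk_int : Integrable k (P θ) :=
    .of_bound hk.aestronglyMeasurable C (.of_forall hkC)
  calc dist (∫ x, k x ∂P θ) (∫ x, s x ∂P θ) = ‖∫ x, (k x - s x) ∂P θ‖ := by
        rw [dist_eq_norm, integral_sub hk_int s.integrable_of_isFiniteMeasure]
    _ ≤ ε / M * (P θ).real Set.univ := norm_integral_le_of_norm_le_const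
        (.of_forall fun x => by rw [← dist_eq_norm, dist_comm]; exact (hs x).le)
    _ < ε / M * M := mul_lt_mul_of_pos_left hθ (div_pos hε hM)
    _ = ε := div_mul_cancel₀ ε hM.ne'

variable {P : Θ → Measure X}

theorem forall_ae_of_dense [∀ θ, IsFiniteMeasure (P θ)] {D : Set Θ}
    (hD : @Dense Θ (modelTopology P) D) {p : X → Prop} (hp : MeasurableSet {x | p x})
    (h : ∀ θ ∈ D, ∀ᵐ x ∂P θ, p x) (θ : Θ) : ∀ᵐ x ∂P θ, p x := by
  let : TopologicalSpace Θ := modelTopology P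
  have h_real : (fun θ => (P θ).real {x | p x}ᶜ) = fun _ => 0 :=
    (continuous_measureReal P hp.compl).ext_on hD continuous_const fun θ hθ => by
      simpa [Measure.real] using congrArg ENNReal.toReal (h θ hθ)
  exact (measureReal_eq_zero_iff).1 (congrFun h_real θ)

theorem forall_condExp_ae_eq_of_dense [∀ θ, IsFiniteMeasure (P θ)] {D : Set Θ}
    (hD : @Dense Θ (modelTopology P) D) (hm : m ≤ mX) {F : Type*} [NormedAddCommGroup F]
    [NormedSpace ℝ F] [ProperSpace F] [MeasurableSpace F] [BorelSpace F] {g κ : X → F}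
    {C : ℝ} (hg : Measurable g) (hgC : ∀ x, ‖g x‖ ≤ C) (hκ : Measurable[m] κ)
    (hκC : ∀ x, ‖κ x‖ ≤ C) (h : ∀ θ ∈ D, (P θ)[g | m] =ᵐ[P θ] κ) (θ : Θ) :
    (P θ)[g | m] =ᵐ[P θ] κ := by
  let : TopologicalSpace Θ := modelTopology P
  have hint {k : X → F} (hk : Measurable k) (hkC : ∀ x, ‖k x‖ ≤ C) (θ : Θ) : Integrable k (P θ) :=
    .of_bound hk.aestronglyMeasurable C (.of_forall hkC)
  have hκX : Measurable κ := hκ.mono hm le_rfl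
  refine (ae_eq_condExp_of_forall_setIntegral_eq hm (hint hg hgC θ)
    (fun s _ _ => (hint hκX hκC θ).integrableOn) (fun s hs _ => ?_)
    hκ.stronglyMeasurable.aestronglyMeasurable).symm
  have hcont {k : X → F} (hk : Measurable k) (hkC : ∀ x, ‖k x‖ ≤ C) :
      Continuous fun θ => ∫ x in s, k x ∂P θ := by
    simp_rw [← integral_indicator (hm s hs)]
    exact continuous_integral_of_norm_le P (hk.indicator (hm s hs))
      fun x => (norm_indicator_le_norm_self k x).trans (hkC x)
  refine congrFun ((hcont hκX hκC).ext_on hD (hcont hg hgC) fun θ' hθ' => ?_) θ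
  calc ∫ x in s, κ x ∂P θ' = ∫ x in s, (P θ')[g | m] x ∂P θ' :=
        integral_congr_ae (ae_restrict_of_ae (h θ' hθ').symm)
    _ = ∫ x in s, g x ∂P θ' := setIntegral_condExp hm (hint hg hgC θ') hs

end modelTopology

section SufficientSubalgebra

variable {X : Type u} {m mX : MeasurableSpace X} {Θ : Type v} {P : Θ → Measure X} {ι : Type*}

theorem measurableSet_completionAlg_of_forall_ae_eq {s t : Set X} (hs : MeasurableSet[mX] s)
    (hm : m ≤ mX) (ht : MeasurableSet[m] t) (hst : ∀ θ, s =ᵐ[P θ] t) :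
    MeasurableSet[completionAlg P m] s := by
  have of_null {N : Set X} (hN : MeasurableSet[mX] N) (hN0 : ∀ θ, P θ N = 0) :
      MeasurableSet[completionAlg P m] N :=
    MeasurableSpace.measurableSet_generateFrom (Or.inr ⟨hN, hN0⟩)
  have ht' : MeasurableSet[completionAlg P m] t :=
    MeasurableSpace.measurableSet_generateFrom (Or.inl ht)
  have hsdiff : MeasurableSet[completionAlg P m] (s \ t) :=
    of_null (hs.diff (hm t ht)) fun θ => (ae_eq_set.1 (hst θ)).1
  have htdiff : MeasurableSet[completionAlg P m] (t \ s) :=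
    of_null ((hm t ht).diff hs) fun θ => (ae_eq_set.1 (hst θ)).2
  rw [show s = (t \ (t \ s)) ∪ (s \ t) by rw [Set.sdiff_sdiff_right_self]; grind]
  exact (ht'.diff htdiff).union hsdiff

theorem comap_le_completionAlg_of_forall_ae_eq {β : Type*} [mβ : MeasurableSpace β] {f g : X → β}
    (hf : Measurable[mX] f) (hm : m ≤ mX) (hg : Measurable[m] g) (hfg : ∀ θ, f =ᵐ[P θ] g) :
    mβ.comap f ≤ completionAlg P m := by
  rintro _ ⟨S, hS, rfl⟩
  exact measurableSet_completionAlg_of_forall_ae_eq (hf hS) hm (hg hS) fun θ =>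
    (hfg θ).preimage S

theorem isSufficientSubalgebra_of_dense_isDensity [∀ θ, IsFiniteMeasure (P θ)] {θs : ι → Θ}
    (hdense : @Dense Θ (modelTopology P) (Set.range θs)) {μ : Measure X} [IsFiniteMeasure μ]
    {f : ι → X → ℝ} (hf : ∀ i, IsDensity (P (θs i)) μ (f i)) (hm : m ≤ mX)
    (hfm : ∀ i, Measurable[m] (f i)) : IsSufficientSubalgebra P m := by
  refine ⟨hm, fun E hE => ?_⟩
  set e : X → ℝ := E.indicator fun _ => 1
  have he_mem (x : X) : e x ∈ Set.Icc 0 1 :=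
    ⟨Set.indicator_nonneg (fun _ _ => zero_le_one) x,
      Set.indicator_le_self' (fun _ _ => zero_le_one) x⟩
  have he (ν : Measure X) [IsFiniteMeasure ν] : Integrable e ν := (integrable_const 1).indicator hE
  have norm_le_one {y : ℝ} (hy : y ∈ Set.Icc 0 1) : ‖y‖ ≤ 1 := by
    rw [Real.norm_of_nonneg hy.1]
    exact hy.2
  obtain ⟨κ, hκ, hκ_mem, hκe⟩ := exists_measurable_forall_mem_Icc_condExp_ae_eq hm zero_le_one
    (he μ) (.of_forall he_mem)
  refine ⟨κ, hκ, modelTopology.forall_condExp_ae_eq_of_dense hdense hm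
    (measurable_const.indicator hE) (fun x => norm_le_one (he_mem x)) hκ
    (fun x => norm_le_one (hκ_mem x)) ?_⟩
  rintro _ ⟨i, rfl⟩
  exact ((hf i).condExp_ae_eq hm (hfm i) (he _) (he μ)).trans
    ((hf i).absolutelyContinuous.ae_eq hκe)

variable [Countable ι]

theorem IsSufficientSubalgebra.density_ae_eq_condExp [∀ θ, IsFiniteMeasure (P θ)]
    (hm : IsSufficientSubalgebra P m) {c : ι → NNReal} {θs : ι → Θ} {μ : Measure X}
    [IsFiniteMeasure μ] (hμ : μ = Measure.sum fun i => c i • P (θs i)) {θ : Θ} {f : X → ℝ}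
    (hf : IsDensity (P θ) μ f) : f =ᵐ[μ] μ[f | m] := by
  refine hf.ae_eq_condExp_of_condExp_indicator_ae_eq hm.1 fun E hE => ?_
  obtain ⟨κ, hκ, hκP⟩ := hm.2 E hE
  have he (ν : Measure X) [IsFiniteMeasure ν] : Integrable (E.indicator fun _ => (1 : ℝ)) ν :=
    (integrable_const 1).indicator hE
  have hκμ : μ[E.indicator (fun _ => (1 : ℝ)) | m] =ᵐ[μ] κ := by
    subst hμ
    refine condExp_sum_measure_ae_eq hm.1 (he _) hκ.stronglyMeasurable fun i => ?_
    have hd := isDensity_nnreal_smul (P (θs i)) (c i)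
    exact (hd.condExp_ae_eq hm.1 measurable_const (he _) (he _)).trans
      (hd.absolutelyContinuous.ae_eq (hκP (θs i)))
  exact (hκP θ).trans (hf.absolutelyContinuous.ae_eq hκμ).symm

theorem IsSufficientSubalgebra.comap_le_completionAlg [∀ θ, IsFiniteMeasure (P θ)]
    (hm : IsSufficientSubalgebra P m) {c : ι → NNReal} {θs : ι → Θ}
    (hdense : @Dense Θ (modelTopology P) (Set.range θs)) {μ : Measure X}
    [IsFiniteMeasure μ] (hμ : μ = Measure.sum fun i => c i • P (θs i)) {f : ι → X → ℝ}
    (hf : ∀ i, IsDensity (P (θs i)) μ (f i)) (i : ι) :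
    Real.measurableSpace.comap (f i) ≤ completionAlg P m := by
  have hg : Measurable[m] (μ[f i | m]) := stronglyMeasurable_condExp.measurable
  refine comap_le_completionAlg_of_forall_ae_eq (hf i).1 hm.1 hg
    (modelTopology.forall_ae_of_dense hdense
      (measurableSet_eq_fun (hf i).1 (hg.mono hm.1 le_rfl)) ?_)
  rintro _ ⟨j, rfl⟩
  exact (hf j).absolutelyContinuous.ae_eq (hm.density_ae_eq_condExp hμ (hf i))

end SufficientSubalgebra

theorem countablyGenerated_iSup {X ι : Type*} [Countable ι] {m : ι → MeasurableSpace X}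
    (hm : ∀ i, @MeasurableSpace.CountablyGenerated X (m i)) :
    @MeasurableSpace.CountablyGenerated X (⨆ i, m i) := by
  choose b hb hmb using fun i => (hm i).isCountablyGenerated
  refine @MeasurableSpace.CountablyGenerated.mk X (⨆ i, m i)
    ⟨⋃ i, b i, Set.countable_iUnion hb, ?_⟩
  simp_rw [hmb]
  exact MeasurableSpace.iSup_generateFrom b

theorem isFiniteMeasure_sum_smul {X ι : Type*} [MeasurableSpace X] (μ : ι → Measure X)
    [∀ i, IsProbabilityMeasure (μ i)]
    {c : ι → NNReal} (hc : Summable c) : IsFiniteMeasure (Measure.sum fun i => c i • μ i) := by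
  refine ⟨?_⟩
  simp only [Measure.sum_apply _ .univ, Measure.smul_apply, ENNReal.smul_def, measure_univ,
    smul_eq_mul, mul_one]
  exact (ENNReal.tsum_coe_ne_top_iff_summable.2 hc).lt_top

theorem prop_4_7_ii_general {X : Type u} [MeasurableSpace X] {Θ : Type v} {ι : Type*} [Countable ι]
    (P : Θ → Measure X) [∀ θ, IsFiniteMeasure (P θ)] (c : ι → NNReal) (θs : ι → Θ)
    (hdense : @Dense Θ (modelTopology P) (Set.range θs))
    [IsFiniteMeasure (Measure.sum fun j => c j • P (θs j))] (f : ι → X → ℝ)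
    (hf : ∀ i, IsDensity (P (θs i)) (Measure.sum fun j => c j • P (θs j)) (f i)) :
    @MeasurableSpace.CountablyGenerated X
      (⨆ i, MeasurableSpace.comap (f i) Real.measurableSpace) ∧
    IsMinimalSufficientSubalgebra P
      (⨆ i, MeasurableSpace.comap (f i) Real.measurableSpace) :=
  ⟨countablyGenerated_iSup fun i => .comap (f i),
    isSufficientSubalgebra_of_dense_isDensity hdense hf (iSup_le fun i => (hf i).1.comap_le)
      fun i => (comap_measurable (f i)).mono
        (le_iSup (fun i => MeasurableSpace.comap (f i) Real.measurableSpace) i) le_rfl,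
    fun _ hm => iSup_le (hm.comap_le_completionAlg hdense rfl hf)⟩

/-- Proposition 4.7(ii). -/
theorem prop_4_7_ii
    {X : Type u} [mX : MeasurableSpace X] {Θ : Type v} [Nonempty Θ]
    (P : Θ → Measure X) (hP : ∀ θ, IsProbabilityMeasure (P θ))
    (c : ℕ → ℝ) (hc : ∀ n, 0 < c n) (hsum : (∑' n, c n) = 1)
    (θseq : ℕ → Θ) (hdense : @Dense Θ (modelTopology P) (Set.range θseq))
    (f : ℕ → X → ℝ)
    (hf : ∀ n, IsDensity (P (θseq n))
      (Measure.sum fun j => ENNReal.ofReal (c j) • P (θseq j)) (f n)) :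
    @MeasurableSpace.CountablyGenerated X
      (⨆ n, MeasurableSpace.comap (f n) Real.measurableSpace) ∧
    IsMinimalSufficientSubalgebra P
      (⨆ n, MeasurableSpace.comap (f n) Real.measurableSpace) := by
  have hc_summable : Summable c := by
    by_contra h
    simp [tsum_eq_zero_of_not_summable h] at hsum
  have := isFiniteMeasure_sum_smul (fun n => P (θseq n)) hc_summable.toNNReal
  exact prop_4_7_ii_general P (fun n => (c n).toNNReal) θseq hdense f hf
end
end

section
/- Proposition 4.8. Let (𝒳,Σ_𝒳), (𝒴,Σ_𝒴), (𝒵,Σ_𝒵) be measurable spaces and f : 𝒳 → 𝒴 and g : 𝒳 → 𝒵 measurable functions. Suppose (𝒳,Σ_𝒳) is an analytic Borel space and (𝒴,Σ_𝒴) is separable. If for all x, y ∈ 𝒳, f(x) = f(y) implies g(x) = g(y), then σ(g) ⊆ σ(f), i.e., g⁻¹(Σ_𝒵) ⊆ f⁻¹(Σ_𝒴). -/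
open MeasureTheory

noncomputable section

universe u v w u'

/-!
Since `g` is constant on the fibres of `f`, it descends to a map `h` on `range f` with
`g = h ∘ f`. If `p` maps a standard Borel space onto `X`, then `h ∘ (f ∘ p) = g ∘ p` is measurable,
and Lusin separation makes the measurable surjection `f ∘ p` onto the countably separated space
`range f` a quotient map of measurable spaces. Hence `h` is measurable for the trace σ-algebra on
`range f`, whose pullback along `f` is `σ(f)`.
-/

section StandardBorelImage

open Function Set

theorem comp_rangeSplitting_comp_rangeFactorization {α β γ : Type*} {f : α → β} {g : α → γ}
    (hfg : g.FactorsThrough f) : (g ∘ rangeSplitting f) ∘ rangeFactorization f = g :=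
  funext fun x => hfg (apply_rangeSplitting f (rangeFactorization f x))

theorem comap_rangeFactorization {α β : Type*} [mβ : MeasurableSpace β] (f : α → β) :
    MeasurableSpace.comap (rangeFactorization f) inferInstance = mβ.comap f :=
  MeasurableSpace.comap_comp

variable {W X Y Z : Type*} [MeasurableSpace W] [StandardBorelSpace W] [MeasurableSpace X]
  [mY : MeasurableSpace Y] [mZ : MeasurableSpace Z] {p : W → X} {f : X → Y} {g : X → Z}
  [MeasurableSpace.CountablySeparated (range f)]

theorem measurable_comp_rangeSplitting (hp : Measurable p) (hp_surj : Surjective p)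
    (hf : Measurable f) (hg : Measurable g) (hfg : g.FactorsThrough f) :
    Measurable (g ∘ rangeSplitting f) := by
  have hq : Measurable (rangeFactorization f ∘ p) := hf.rangeFactorization.comp hp
  have hq_surj : Surjective (rangeFactorization f ∘ p) := rangeFactorization_surjective.comp hp_surj
  rw [← hq.measurable_comp_iff_of_surjective hq_surj, ← comp_assoc,
    comp_rangeSplitting_comp_rangeFactorization hfg]
  exact hg.comp hp

theorem prop_4_8_general (hp : Measurable p) (hp_surj : Surjective p)
    (hf : Measurable f) (hg : Measurable g) (hfg : g.FactorsThrough f) :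
    mZ.comap g ≤ mY.comap f := by
  rw [← comap_rangeFactorization f]
  exact MeasurableSpace.comap_le_comap_of_eq_comp _
    (measurable_comp_rangeSplitting hp hp_surj hf hg hfg)
    (comp_rangeSplitting_comp_rangeFactorization hfg).symm

end StandardBorelImage

/-- Proposition 4.8. -/
theorem prop_4_8
    {X : Type u} [mX : MeasurableSpace X] {Y : Type v} [mY : MeasurableSpace Y]
    {Z : Type w} [mZ : MeasurableSpace Z]
    (f : X → Y) (g : X → Z) (hfm : Measurable f) (hgm : Measurable g)
    (hX : IsAnalyticBorel X)
    (hYcg : MeasurableSpace.CountablyGenerated Y) (hYsing : MeasurableSingletonClass Y)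
    (hfg : ∀ x y : X, f x = f y → g x = g y) :
    MeasurableSpace.comap g mZ ≤ MeasurableSpace.comap f mY := by
  obtain ⟨-, -, W, _, _, p, hp, hp_surj⟩ := hX
  exact prop_4_8_general hp hp_surj hfm hgm fun x y => hfg x y
end
end
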